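/- arXiv:1304.1639 — 2 statements merged into one kernel-verified Lean document; each statement's English description precedes it below -/
import Mathlib

section
/- Let X be a d-box and F ⊆ X a polybox. If 𝔉 is a proper suit for F which contains no twin pair of boxes and |𝔉| ≤ 11, then every proper suit 𝔊 for F either contains a twin pair of boxes or is equal to 𝔉. -/
/-- The subset of the `d`-box `X₁ × ⋯ × X_d` determined by a box
`K = K₁ × ⋯ × K_d`. -/
def boxSet {d : ℕ} {X : Fin d → Type*} (K : ∀ i, Set (X i)) :
    Set (∀ i, X i) :=
  {x | ∀ i, x i ∈ K i}

/-- `K` is a box: each factor is nonempty. -/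
def IsBox {d : ℕ} {X : Fin d → Type*} (K : ∀ i, Set (X i)) : Prop :=
  ∀ i, (K i).Nonempty

/-- `K` is a proper box: each factor is nonempty and proper. -/
def IsProperBox {d : ℕ} {X : Fin d → Type*} (K : ∀ i, Set (X i)) : Prop :=
  ∀ i, (K i).Nonempty ∧ K i ≠ Set.univ

/-- Boxes `K` and `G` are dichotomous: `K_i = X_i \ G_i` for some `i`. -/
def BoxDichotomous {d : ℕ} {X : Fin d → Type*}
    (K G : ∀ i, Set (X i)) : Prop :=
  ∃ i, K i = (G i)ᶜ

/-- A suit: a family of pairwise dichotomous boxes. -/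
def IsSuit {d : ℕ} {X : Fin d → Type*} (𝓕 : Set (∀ i, Set (X i))) : Prop :=
  (∀ K ∈ 𝓕, IsBox K) ∧ 𝓕.Pairwise BoxDichotomous

/-- Boxes `K` and `G` form a twin pair. -/
def BoxTwinPair {d : ℕ} {X : Fin d → Type*}
    (K G : ∀ i, Set (X i)) : Prop :=
  ∃ j, K j = (G j)ᶜ ∧ ∀ i, i ≠ j → K i = G i

/-!
Only the complementarity relation between factors matters. A proper box is therefore encoded as a
word over an alphabet whose letters come in complementary pairs, and a word as a cylinder of the
universal box, whose points choose one letter from every complementary pair. Changing one coordinate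
at a time shows that two proper suits for the same set also have the same union in the universal
box. Averaging over all points obtained from one point by complementing its choices on a set of
coordinates, every cylinder has the same weight, so codes covering the same set are equally large.

Let two twin-free codes of at most eleven words have the same union; delete their common words.
The weight of a complementary pair `a` at a coordinate `i` is half the number of words of both codes
with a letter of `a` at `i`, so the weights at `i` add up to at most eleven. A twin-free code of at
most four words covers a box only if it contains that box. Hence two words of different codes that
differ only at `i`, by letters of different pairs, would force weight at least six on both pairs,
which is impossible; and then every pair that occurs has weight at least four, so that at most two
pairs occur at each coordinate. If some pair had weight at most five, the words over it would split
into two families of at most five words that cover every point equally often; comparing the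
fibres of these families over single letters, some of which contain at most two words, shows that
they are empty. So every pair that occurs has weight at least six. But a word of one code meets a
different word of the other code, and the two pairs at a coordinate where these words differ have
total weight at least twelve.
-/

namespace PolyboxCode

open scoped Classical

variable {ι P : Type*}

/-! ### Words and the universal box -/

/-- A letter `⟨a, b⟩` of an alphabet in which every letter has a complementary one: `a` names the
complementary pair `{⟨a, true⟩, ⟨a, false⟩}` and `b` tells its two members apart. -/
@[ext]
structure Letter (P : Type*) where
  base : P
  sign : Bool

namespace Letter

instance : Compl (Letter P) := ⟨fun l => ⟨l.base, !l.sign⟩⟩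

@[simp, grind =] theorem compl_base (l : Letter P) : lᶜ.base = l.base := rfl

@[simp] theorem compl_sign (l : Letter P) : lᶜ.sign = !l.sign := rfl

@[simp, grind =] protected theorem compl_compl (l : Letter P) : lᶜᶜ = l :=
  Letter.ext rfl (Bool.not_not _)

@[simp, grind ←] theorem compl_ne (l : Letter P) : lᶜ ≠ l := fun h =>
  Bool.not_ne_self _ (congrArg sign h)

@[simp] theorem ne_compl (l : Letter P) : l ≠ lᶜ := (compl_ne l).symm

@[simp, grind =] protected theorem compl_inj {l m : Letter P} : lᶜ = mᶜ ↔ l = m :=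
  (Function.LeftInverse.injective Letter.compl_compl).eq_iff

theorem eq_or_eq_compl_of_base_eq {l m : Letter P} (h : l.base = m.base) : l = m ∨ l = mᶜ :=
  (Bool.eq_or_eq_not l.sign m.sign).imp (Letter.ext h) (Letter.ext h)

theorem base_ne_of_ne {l m : Letter P} (h : l ≠ m) (h' : l ≠ mᶜ) : l.base ≠ m.base := fun hb =>
  (eq_or_eq_compl_of_base_eq hb).elim h h'

end Letter

/-- Words over an alphabet of letters, one letter for each coordinate; they stand for boxes. -/
abbrev Word (ι P : Type*) := ι → Letter P

/-- Points of the universal box: at each coordinate, a point chooses one letter from every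
complementary pair. -/
abbrev Point (ι P : Type*) := ι → P → Bool

/-- The choice function `y` picks the letter `l` from its complementary pair. -/
def Selects (y : P → Bool) (l : Letter P) : Prop := y l.base = l.sign

@[simp] theorem selects_compl {y : P → Bool} {l : Letter P} :
    Selects y lᶜ ↔ ¬ Selects y l := by
  simp [Selects, Bool.eq_not]

theorem Selects.eq_of_base_eq {y : P → Bool} {l m : Letter P} (hl : Selects y l)
    (hm : Selects y m) (h : l.base = m.base) : l = m :=
  Letter.ext h (by rw [← hl, ← hm, h])

/-- The box in the universal box that is encoded by the word `v`. -/
def cylinder (v : Word ι P) : Set (Point ι P) := {x | ∀ i, Selects (x i) (v i)}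

/-- The box encoded by the word `v` with its constraint at the coordinate `j` dropped. -/
def cylinderOff (j : ι) (v : Word ι P) : Set (Point ι P) := {x | ∀ i ≠ j, Selects (x i) (v i)}

theorem cylinderOff_congr {j : ι} {u v : Word ι P} (h : Set.EqOn u v {j}ᶜ) :
    cylinderOff j u = cylinderOff j v :=
  Set.ext fun _ => forall₂_congr fun i (hi : i ≠ j) => by rw [h hi]

theorem mem_cylinder_iff_mem_cylinderOff {x : Point ι P} {v : Word ι P} (j : ι) :
    x ∈ cylinder v ↔ Selects (x j) (v j) ∧ x ∈ cylinderOff j v :=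
  ⟨fun h => ⟨h j, fun i _ => h i⟩, fun h i => by
    by_cases hi : i = j
    · exact hi ▸ h.1
    · exact h.2 i hi⟩

theorem mem_cylinder_update {x : Point ι P} {v : Word ι P} {j : ι} {l : Letter P} :
    x ∈ cylinder (Function.update v j l) ↔ Selects (x j) l ∧ x ∈ cylinderOff j v := by
  rw [mem_cylinder_iff_mem_cylinderOff j, Function.update_self,
    cylinderOff_congr fun i (hi : i ≠ j) => Function.update_of_ne hi l v]

/-- The point obtained from `x` by making it choose the letter `l` at the coordinate `j`. -/
noncomputable def force (x : Point ι P) (j : ι) (l : Letter P) : Point ι P :=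
  Function.update x j (Function.update (x j) l.base l.sign)

theorem selects_force_self (x : Point ι P) (j : ι) (l : Letter P) : Selects (force x j l j) l := by
  simp [force, Selects]

theorem mem_cylinderOff_force {x : Point ι P} {j : ι} {l : Letter P} {v : Word ι P} :
    force x j l ∈ cylinderOff j v ↔ x ∈ cylinderOff j v :=
  forall₂_congr fun i hi => by rw [force, Function.update_of_ne hi]

theorem mem_cylinder_force_of_base_ne {x : Point ι P} {j : ι} {l : Letter P} {v : Word ι P}
    (h : (v j).base ≠ l.base) : force x j l ∈ cylinder v ↔ x ∈ cylinder v := by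
  rw [mem_cylinder_iff_mem_cylinderOff j, mem_cylinder_iff_mem_cylinderOff (x := x) j,
    mem_cylinderOff_force]
  simp [force, Selects, h]

theorem mem_cylinder_force_iff {x : Point ι P} {j : ι} {l : Letter P} {v : Word ι P}
    (h : v j = l) : force x j l ∈ cylinder v ↔ x ∈ cylinderOff j v := by
  rw [mem_cylinder_iff_mem_cylinderOff j, mem_cylinderOff_force, h]
  exact and_iff_right (selects_force_self x j l)

theorem exists_forall_selects (S : Set (ι × Letter P)) (hS : ∀ i l, (i, l) ∈ S → (i, lᶜ) ∉ S) :
    ∃ x : Point ι P, ∀ i l, (i, l) ∈ S → Selects (x i) l := by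
  refine ⟨fun i a => decide ((i, ⟨a, true⟩) ∈ S), fun i ⟨a, b⟩ h => ?_⟩
  cases b
  · have : (i, (⟨a, true⟩ : Letter P)) ∉ S := hS _ _ h
    simpa [Selects] using this
  · simpa [Selects] using h

/-- Boxes of words are dichotomous when some coordinate carries complementary letters. -/
def Dichotomous (u v : Word ι P) : Prop := ∃ i, u i = (v i)ᶜ

/-- Two words are compatible if their boxes meet. -/
def Compatible (u v : Word ι P) : Prop := (cylinder u ∩ cylinder v).Nonempty

theorem Compatible.ne_compl {u v : Word ι P} (h : Compatible u v) (i : ι) : u i ≠ (v i)ᶜ := by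
  obtain ⟨x, hu, hv⟩ := h
  intro hi
  exact selects_compl.1 (hi ▸ hu i) (hv i)

theorem Compatible.base_ne {u v : Word ι P} (h : Compatible u v) {i : ι} (hi : u i ≠ v i) :
    (u i).base ≠ (v i).base :=
  Letter.base_ne_of_ne hi (h.ne_compl i)

theorem compatible_self (p : Word ι P) : Compatible p p := by
  obtain ⟨x, hx⟩ := exists_forall_selects {c : ι × Letter P | c.2 = p c.1}
    fun i l (h : l = p i) (h' : lᶜ = p i) => l.compl_ne (h'.trans h.symm)
  exact ⟨x, fun i => hx i _ rfl, fun i => hx i _ rfl⟩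

theorem cylinder_nonempty (p : Word ι P) : (cylinder p).Nonempty :=
  (compatible_self p).mono Set.inter_subset_left

theorem Compatible.exists_not_selects {p q : Word ι P} (h : Compatible p q)
    (S : Set (ι × Letter P)) (hS : ∀ i l, (i, l) ∈ S → (i, lᶜ) ∉ S)
    (hp : ∀ i, (i, p i) ∉ S) (hq : ∀ i, (i, q i) ∉ S) :
    ∃ x ∈ cylinder p, x ∈ cylinder q ∧ ∀ i l, (i, l) ∈ S → ¬ Selects (x i) l := by
  obtain ⟨x, hx⟩ := exists_forall_selects
    {c : ι × Letter P | c.2 = p c.1 ∨ c.2 = q c.1 ∨ (c.1, c.2ᶜ) ∈ S} fun i l => by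
      have := h.ne_compl i
      simp only [Set.mem_ofPred_eq]
      grind
  refine ⟨x, fun i => hx i _ (.inl rfl), fun i => hx i _ (.inr (.inl rfl)), fun i l hl => ?_⟩
  exact selects_compl.1 (hx i lᶜ (.inr (.inr (by simpa using hl))))

theorem Compatible.exists_not_selects_letter {p q : Word ι P} (h : Compatible p q) {i : ι}
    {l : Letter P} (hp : l ≠ p i) (hq : l ≠ q i) :
    ∃ x ∈ cylinder p, x ∈ cylinder q ∧ ¬ Selects (x i) l := by
  obtain ⟨x, hxp, hxq, hx⟩ := h.exists_not_selects {(i, l)} (by simp +contextual) (by grind)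
    (by grind)
  exact ⟨x, hxp, hxq, hx i l rfl⟩

theorem eq_of_cylinder_subset {u v : Word ι P} (h : cylinder u ⊆ cylinder v) : u = v := by
  by_contra hne
  obtain ⟨i, hi⟩ := Function.ne_iff.1 hne
  obtain ⟨x, hx, -, hxi⟩ := (compatible_self u).exists_not_selects_letter hi.symm hi.symm
  exact hxi (h hx i)

theorem eq_update_of_cylinder_subset_union {u v w : Word ι P}
    (h : cylinder u ⊆ cylinder v ∪ cylinder w) (hv : v ≠ u) (hw : w ≠ u) :
    ∃ k z, z.base ≠ (u k).base ∧ v = Function.update u k z ∧ w = Function.update u k zᶜ := by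
  have conflict : ∀ l m, v l ≠ u l → w m ≠ u m → l = m ∧ v l = (w l)ᶜ := by
    intro l m hl hm
    by_contra hc
    obtain ⟨x, hx, -, hxS⟩ := (compatible_self u).exists_not_selects {(l, v l), (m, w m)}
      (by grind) (by grind) (by grind)
    exact (h hx).elim (fun hv => hxS l _ (.inl rfl) (hv l)) fun hw => hxS m _ (.inr rfl) (hw m)
  obtain ⟨k, hk⟩ := Function.ne_iff.1 hv
  obtain ⟨m, hm⟩ := Function.ne_iff.1 hw
  obtain ⟨rfl, hvw⟩ := conflict k m hk hm
  refine ⟨k, v k, Letter.base_ne_of_ne hk (by grind), ?_, ?_⟩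
  · exact Function.eq_update_iff.2 ⟨rfl, fun i hi => by_contra fun hc => hi (conflict i k hc hm).1⟩
  · exact Function.eq_update_iff.2 ⟨by rw [hvw, Letter.compl_compl],
      fun i hi => by_contra fun hc => hi (conflict k i hk hc).1.symm⟩

/-! ### Families covering every point equally often -/

/-- The number of boxes of the family `M`, counted with multiplicity, that contain `x`. -/
noncomputable def count (M : Multiset (Word ι P)) (x : Point ι P) : ℕ :=
  M.countP (x ∈ cylinder ·)

/-- The families `M` and `N` of boxes cover every point equally often. -/
def CoverEq (M N : Multiset (Word ι P)) : Prop := ∀ x, count M x = count N x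

theorem CoverEq.symm {M N : Multiset (Word ι P)} (h : CoverEq M N) : CoverEq N M :=
  fun x => (h x).symm

@[simp] theorem count_zero (x : Point ι P) : count 0 x = 0 := Multiset.countP_zero _

@[simp] theorem count_add (M N : Multiset (Word ι P)) (x : Point ι P) :
    count (M + N) x = count M x + count N x :=
  Multiset.countP_add ..

theorem count_cons (v : Word ι P) (M : Multiset (Word ι P)) (x : Point ι P) :
    count (v ::ₘ M) x = count M x + if x ∈ cylinder v then 1 else 0 :=
  Multiset.countP_cons ..

theorem count_singleton (v : Word ι P) (x : Point ι P) :
    count {v} x = if x ∈ cylinder v then 1 else 0 := by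
  rw [← Multiset.cons_zero, count_cons, count_zero, zero_add]

theorem count_pair (u v : Word ι P) (x : Point ι P) :
    count {u, v} x = (if x ∈ cylinder u then 1 else 0) + if x ∈ cylinder v then 1 else 0 := by
  rw [Multiset.insert_eq_cons, count_cons, count_singleton, add_comm]

theorem count_pos {M : Multiset (Word ι P)} {x : Point ι P} :
    0 < count M x ↔ ∃ v ∈ M, x ∈ cylinder v :=
  Multiset.countP_pos

theorem CoverEq.exists_mem_cylinder {M N : Multiset (Word ι P)} (h : CoverEq M N) {v : Word ι P}
    (hv : v ∈ M) {x : Point ι P} (hx : x ∈ cylinder v) : ∃ w ∈ N, x ∈ cylinder w :=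
  count_pos.1 (h x ▸ count_pos.2 ⟨v, hv, hx⟩)

/-- The point obtained from `x` by complementing all its choices at the coordinates marked by
`σ`. -/
def twist (σ : ι → Bool) (x : Point ι P) : Point ι P := fun i a => xor (σ i) (x i a)

theorem twist_mem_cylinder_iff {σ : ι → Bool} {x : Point ι P} {v : Word ι P} :
    twist σ x ∈ cylinder v ↔ σ = fun i => xor (x i (v i).base) (v i).sign := by
  rw [funext_iff]
  refine forall_congr' fun i => ?_
  simp only [Selects, twist]
  cases σ i <;> cases x i (v i).base <;> cases (v i).sign <;> decide

theorem sum_count_twist [Fintype ι] (M : Multiset (Word ι P)) (x : Point ι P) :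
    ∑ σ : ι → Bool, count M (twist σ x) = M.card := by
  induction M using Multiset.induction_on with
  | empty => simp
  | cons v M ih =>
    simp only [count_cons, twist_mem_cylinder_iff, Finset.sum_add_distrib, ih,
      Finset.sum_ite_eq', Finset.mem_univ, if_true, Multiset.card_cons]

theorem card_le_of_count_le [Finite ι] {M N : Multiset (Word ι P)}
    (h : ∀ x, count M x ≤ count N x) : M.card ≤ N.card := by
  have := Fintype.ofFinite ι
  rw [← sum_count_twist M fun _ _ => true, ← sum_count_twist N fun _ _ => true]
  exact Finset.sum_le_sum fun σ _ => h _

theorem CoverEq.card_eq [Finite ι] {M N : Multiset (Word ι P)} (h : CoverEq M N) :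
    M.card = N.card :=
  (card_le_of_count_le fun x => (h x).le).antisymm (card_le_of_count_le fun x => (h x).ge)

theorem eq_of_coverEq_singleton {u v : Word ι P} (h : CoverEq {u} {v}) : u = v := by
  refine eq_of_cylinder_subset fun x hx => ?_
  have hcount := h x
  simp only [count_singleton, hx, if_true] at hcount
  by_contra hxv
  simp [hxv] at hcount

theorem pair_eq_or_of_coverEq {u₁ u₂ v₁ v₂ : Word ι P} (h : CoverEq {u₁, u₂} {v₁, v₂}) :
    (v₁ = u₁ ∧ v₂ = u₂) ∨ (v₂ = u₁ ∧ v₁ = u₂) ∨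
      ∃ k z, z.base ≠ (u₁ k).base ∧ u₂ = Function.update u₁ k (u₁ k)ᶜ ∧
        v₁ = Function.update u₁ k z ∧ v₂ = Function.update u₁ k zᶜ := by
  have subset_union : ∀ {p₁ p₂ q₁ q₂ : Word ι P}, CoverEq {p₁, p₂} {q₁, q₂} →
      cylinder p₁ ⊆ cylinder q₁ ∪ cylinder q₂ := by
    intro p₁ p₂ q₁ q₂ hpq x hx
    have hcount := hpq x
    simp only [count_pair, hx, if_true] at hcount
    by_contra hxq
    simp only [Set.mem_union, not_or] at hxq
    simp [hxq] at hcount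
  have other_eq : ∀ {u p q : Word ι P}, CoverEq {u, p} {u, q} → q = p := fun {u p q} hpq =>
    (eq_of_coverEq_singleton fun x => by
      simpa only [count_pair, count_singleton, Nat.add_left_cancel_iff] using hpq x).symm
  by_cases h₁ : v₁ = u₁
  · exact .inl ⟨h₁, other_eq (h₁ ▸ h)⟩
  by_cases h₂ : v₂ = u₁
  · exact .inr (.inl ⟨h₂, other_eq (by rwa [h₂, Multiset.pair_comm v₁] at h)⟩)
  obtain ⟨k, z, hz, hv₁, hv₂⟩ := eq_update_of_cylinder_subset_union (subset_union h) h₁ h₂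
  have hne : u₂ ≠ v₁ := by
    rintro rfl
    rw [Multiset.pair_comm] at h
    exact h₂ (other_eq h)
  obtain ⟨k', z', -, hu₁, hu₂⟩ :=
    eq_update_of_cylinder_subset_union (subset_union h.symm) (Ne.symm h₁) hne
  have hk : k' = k := by
    by_contra hk
    exact hz (by rw [congrFun hu₁ k, Function.update_of_ne (Ne.symm hk), hv₁, Function.update_self])
  refine .inr (.inr ⟨k, z, hz, ?_, hv₁, hv₂⟩)
  subst hk
  rw [hu₂, hv₁, hu₁]
  simp

/-- The number of boxes of the family `M`, counted with multiplicity, that contain `x` once their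
constraints at `j` are dropped. -/
noncomputable def countOff (j : ι) (M : Multiset (Word ι P)) (x : Point ι P) : ℕ :=
  M.countP (x ∈ cylinderOff j ·)

/-- The families `M` and `N` of boxes, with their constraints at `j` dropped, cover every point
equally often. -/
def CoverEqOff (j : ι) (M N : Multiset (Word ι P)) : Prop :=
  ∀ x, countOff j M x = countOff j N x

theorem CoverEqOff.symm {j : ι} {M N : Multiset (Word ι P)} (h : CoverEqOff j M N) :
    CoverEqOff j N M := fun x => (h x).symm

@[simp] theorem countOff_add (j : ι) (M N : Multiset (Word ι P)) (x : Point ι P) :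
    countOff j (M + N) x = countOff j M x + countOff j N x :=
  Multiset.countP_add ..

theorem count_map_update (j : ι) (l : Letter P) (M : Multiset (Word ι P)) (x : Point ι P) :
    count (M.map (Function.update · j l)) x = if Selects (x j) l then countOff j M x else 0 := by
  rw [count, countOff, Multiset.countP_map, ← Multiset.countP_eq_card_filter]
  simp only [mem_cylinder_update]
  split_ifs with h <;> simp [h]

theorem CoverEqOff.map_update {j : ι} {M N : Multiset (Word ι P)} (h : CoverEqOff j M N)
    (l : Letter P) :
    CoverEq (M.map (Function.update · j l)) (N.map (Function.update · j l)) := fun x => by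
  rw [count_map_update, count_map_update, h x]

theorem CoverEqOff.card_eq [Finite ι] {j : ι} {M N : Multiset (Word ι P)}
    (h : CoverEqOff j M N) : M.card = N.card := by
  rcases (M + N).empty_or_exists_mem with h0 | ⟨v, -⟩
  · rw [add_eq_zero] at h0
    rw [h0.1, h0.2]
  · simpa using (h.map_update (v j)).card_eq

theorem eqOn_of_update_eq {j : ι} {l : Letter P} {u v : Word ι P}
    (h : Function.update u j l = Function.update v j l) : Set.EqOn u v {j}ᶜ :=
  fun i (hi : i ≠ j) => by simpa [hi] using congrFun h i

theorem eqOn_of_coverEqOff_singleton {j : ι} {u v : Word ι P} (h : CoverEqOff j {u} {v}) :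
    Set.EqOn u v {j}ᶜ :=
  eqOn_of_update_eq (eq_of_coverEq_singleton (by
    simpa only [Multiset.map_singleton] using h.map_update (u j)))

theorem pair_eqOn_or_of_coverEqOff {j : ι} {u₁ u₂ v₁ v₂ : Word ι P}
    (h : CoverEqOff j {u₁, u₂} {v₁, v₂}) :
    (Set.EqOn v₁ u₁ {j}ᶜ ∧ Set.EqOn v₂ u₂ {j}ᶜ) ∨ (Set.EqOn v₂ u₁ {j}ᶜ ∧ Set.EqOn v₁ u₂ {j}ᶜ) ∨
      ∃ k ≠ j, (v₁ k).base ≠ (u₁ k).base ∧ u₂ k = (u₁ k)ᶜ ∧ v₂ k = (v₁ k)ᶜ ∧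
        ∀ i ≠ j, i ≠ k → u₂ i = u₁ i ∧ v₁ i = u₁ i ∧ v₂ i = u₁ i := by
  have hmap := h.map_update (u₁ j)
  simp only [Multiset.insert_eq_cons, Multiset.map_cons, Multiset.map_singleton] at hmap
  rcases pair_eq_or_of_coverEq hmap with ⟨h₁, h₂⟩ | ⟨h₁, h₂⟩ | ⟨k, z, hz, hu₂, hv₁, hv₂⟩
  · exact .inl ⟨eqOn_of_update_eq h₁, eqOn_of_update_eq h₂⟩
  · exact .inr (.inl ⟨eqOn_of_update_eq h₁, eqOn_of_update_eq h₂⟩)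
  · rw [Function.update_eq_self] at hz hu₂ hv₁ hv₂
    have hkj : k ≠ j := by
      rintro rfl
      have hzk : u₁ k = z := by simpa using congrFun hv₁ k
      exact hz (by rw [hzk])
    have hu₂k : u₂ k = (u₁ k)ᶜ := by simpa [hkj] using congrFun hu₂ k
    have hv₁k : v₁ k = z := by simpa [hkj] using congrFun hv₁ k
    have hv₂k : v₂ k = zᶜ := by simpa [hkj] using congrFun hv₂ k
    refine .inr (.inr ⟨k, hkj, by rwa [hv₁k], hu₂k, by rw [hv₁k, hv₂k], fun i hij hik => ?_⟩)
    exact ⟨by simpa [hij, hik] using congrFun hu₂ i, by simpa [hij, hik] using congrFun hv₁ i,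
      by simpa [hij, hik] using congrFun hv₂ i⟩

/-- The words of the family `M` with the letter `l` at `j`. -/
noncomputable def fiber (M : Multiset (Word ι P)) (j : ι) (l : Letter P) : Multiset (Word ι P) :=
  M.filter (· j = l)

theorem countOff_fiber_add_count_filter (M : Multiset (Word ι P)) (j : ι) (l : Letter P)
    (x : Point ι P) :
    countOff j (fiber M j l) x + count (M.filter fun v => (v j).base ≠ l.base) x =
      count M (force x j l) := by
  have hfiber : countOff j (fiber M j l) x =
      count (M.filter fun v => (v j).base = l.base) (force x j l) := by
    rw [countOff, fiber, count, Multiset.countP_filter, Multiset.countP_filter]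
    refine Multiset.countP_congr rfl fun v _ => propext ?_
    refine ⟨fun ⟨hx, hv⟩ => ⟨(mem_cylinder_force_iff hv).2 hx, by rw [hv]⟩, fun ⟨hx, hv⟩ => ?_⟩
    have hvl : v j = l := (hx j).eq_of_base_eq (selects_force_self x j l) hv
    exact ⟨(mem_cylinder_force_iff hvl).1 hx, hvl⟩
  have hfilter : count (M.filter fun v => (v j).base ≠ l.base) x =
      count (M.filter fun v => (v j).base ≠ l.base) (force x j l) :=
    Multiset.countP_congr rfl fun v hv =>
      propext (mem_cylinder_force_of_base_ne (Multiset.mem_filter.1 hv).2).symm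
  rw [hfiber, hfilter]
  exact (Multiset.countP_eq_countP_filter_add M _ _).symm

theorem countOff_force (M : Multiset (Word ι P)) (j : ι) (l : Letter P) (x : Point ι P) :
    countOff j M (force x j l) = countOff j M x :=
  Multiset.countP_congr rfl fun _ _ => propext mem_cylinderOff_force

theorem CoverEq.coverEqOff_fiber_add_fiber_compl {M N : Multiset (Word ι P)} (h : CoverEq M N)
    (j : ι) (l : Letter P) :
    CoverEqOff j (fiber M j l + fiber N j lᶜ) (fiber N j l + fiber M j lᶜ) := fun x => by
  have hM := countOff_fiber_add_count_filter M j l x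
  have hN := countOff_fiber_add_count_filter N j l x
  have hM' := countOff_fiber_add_count_filter M j lᶜ x
  have hN' := countOff_fiber_add_count_filter N j lᶜ x
  rw [Letter.compl_base] at hM' hN'
  have hl := h (force x j l)
  have hl' := h (force x j lᶜ)
  rw [countOff_add, countOff_add]
  omega

theorem countOff_fiber_add_fiber {M : Multiset (Word ι P)} {j : ι} {l m : Letter P}
    (hlm : l.base ≠ m.base) (hM : ∀ v ∈ M, (v j).base = l.base ∨ (v j).base = m.base)
    (x : Point ι P) :
    countOff j (fiber M j l + fiber M j m) x = count M (force (force x j m) j l) := by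
  set M' := M.filter fun v => (v j).base ≠ l.base with hM'
  have hfiber : fiber M' j m = fiber M j m := by
    rw [fiber, hM', Multiset.filter_filter, fiber]
    exact Multiset.filter_congr fun v _ => ⟨And.left, fun hv => ⟨hv, hv ▸ hlm.symm⟩⟩
  have hempty : M'.filter (fun v => (v j).base ≠ m.base) = 0 := by
    rw [Multiset.filter_eq_nil]
    intro v hv
    obtain ⟨hvM, hvl⟩ := Multiset.mem_filter.1 hv
    exact not_not.2 ((hM v hvM).resolve_left hvl)
  have hl := countOff_fiber_add_count_filter M j l (force x j m)
  have hm := countOff_fiber_add_count_filter M' j m x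
  rw [hempty, count_zero, add_zero, hfiber] at hm
  rw [countOff_force, ← hM', ← hm] at hl
  rw [countOff_add, hl]

theorem CoverEq.coverEqOff_fiber_add_fiber {M N : Multiset (Word ι P)} (h : CoverEq M N) {j : ι}
    {l m : Letter P} (hlm : l.base ≠ m.base)
    (hM : ∀ v ∈ M, (v j).base = l.base ∨ (v j).base = m.base)
    (hN : ∀ v ∈ N, (v j).base = l.base ∨ (v j).base = m.base) :
    CoverEqOff j (fiber M j l + fiber M j m) (fiber N j l + fiber N j m) := fun x => by
  rw [countOff_fiber_add_fiber hlm hM, countOff_fiber_add_fiber hlm hN, h]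

/-! ### Boxes covered by few words -/

/-- The words `u` and `v` form a twin pair: they differ at a single coordinate, where their letters
are complementary. -/
def Twin (u v : Word ι P) : Prop := ∃ k, v k = (u k)ᶜ ∧ Set.EqOn v u {k}ᶜ

/-- The code of a suit without twin pairs: a family of pairwise dichotomous words containing no
twin pair. -/
structure IsTwinFreeCode (V : Finset (Word ι P)) : Prop where
  dichotomous : ∀ u ∈ V, ∀ v ∈ V, u ≠ v → Dichotomous u v
  not_twin : ∀ u ∈ V, ∀ v ∈ V, ¬ Twin u v

/-- The box of `q` lies in the union of the boxes of the words of `C`. -/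
def Covers (C : Finset (Word ι P)) (q : Word ι P) : Prop :=
  ∀ x ∈ cylinder q, ∃ c ∈ C, x ∈ cylinder c

namespace IsTwinFreeCode

variable {V W : Finset (Word ι P)}

theorem mono (hW : IsTwinFreeCode W) (h : V ⊆ W) : IsTwinFreeCode V where
  dichotomous u hu v hv := hW.dichotomous u (h hu) v (h hv)
  not_twin u hu v hv := hW.not_twin u (h hu) v (h hv)

theorem eq_of_compatible (hV : IsTwinFreeCode V) {u v : Word ι P} (hu : u ∈ V) (hv : v ∈ V)
    (h : Compatible u v) : u = v :=
  by_contra fun hne => (hV.dichotomous u hu v hv hne).elim h.ne_compl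

end IsTwinFreeCode

/-- The configuration in which flipping a letter is most informative: a twin-free code `C` covers
`q` by words compatible with `q`, the letters `c j` and `q j` are unrelated, and `c` is the only
word of `C` with the letter `c j` at `j`. -/
structure LoneLetter (C : Finset (Word ι P)) (q c : Word ι P) (j : ι) : Prop where
  code : IsTwinFreeCode C
  covers : Covers C q
  compatible : ∀ v ∈ C, Compatible v q
  mem : c ∈ C
  base_ne : (c j).base ≠ (q j).base
  eq_of_letter_eq : ∀ v ∈ C, v j = c j → v = c

theorem Covers.exists_flip {C : Finset (Word ι P)} {q c : Word ι P} {j : ι} {x : Point ι P}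
    (hq : Covers C q) (hC : IsTwinFreeCode C) (hc : c ∈ C) (hj : (c j).base ≠ (q j).base)
    (hxq : x ∈ cylinder q) (hxc : x ∈ cylinder c) :
    ∃ d ∈ C, d j = (c j)ᶜ ∧ x ∈ cylinderOff j d := by
  obtain ⟨d, hd, hxd⟩ := hq (force x j (c j)ᶜ)
    ((mem_cylinder_force_of_base_ne (l := (c j)ᶜ) hj.symm).2 hxq)
  by_cases hdj : (d j).base = (c j)ᶜ.base
  · have hletter : d j = (c j)ᶜ := (hxd j).eq_of_base_eq (selects_force_self ..) hdj
    exact ⟨d, hd, hletter, (mem_cylinder_force_iff hletter).1 hxd⟩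
  · rw [mem_cylinder_force_of_base_ne hdj] at hxd
    exact absurd (congrArg (fun v => (v j).base) (hC.eq_of_compatible hd hc ⟨x, hxd, hxc⟩)) hdj

namespace LoneLetter

variable {C : Finset (Word ι P)} {q c d d' : Word ι P} {j : ι}

theorem exists_flip (h : LoneLetter C q c j) {x : Point ι P} (hxc : x ∈ cylinder c)
    (hxq : x ∈ cylinder q) : ∃ d ∈ C, d j = (c j)ᶜ ∧ x ∈ cylinderOff j d :=
  h.covers.exists_flip h.code h.mem h.base_ne hxq hxc

theorem eq_or_eq_of_flip (h : LoneLetter C q c j) (hd : d ∈ C) (hdj : d j = (c j)ᶜ) {l : ι}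
    (hl : l ≠ j) : c l = q l ∨ c l = d l := by
  by_contra! hne
  obtain ⟨x, hxd, hxq, hx⟩ := (h.compatible d hd).exists_not_selects_letter hne.2 hne.1
  obtain ⟨c', hc', hc'j, hxc'⟩ :=
    h.covers.exists_flip h.code hd (by rw [hdj]; exact h.base_ne) hxq hxd
  rw [hdj, Letter.compl_compl] at hc'j
  rw [h.eq_of_letter_eq c' hc' hc'j] at hxc'
  exact hx (hxc' l hl)

theorem twin_of_flip_unique (h : LoneLetter C q c j) (hd : d ∈ C) (hdj : d j = (c j)ᶜ)
    (huniq : ∀ v ∈ C, v j = (c j)ᶜ → v = d) : Twin c d := by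
  refine ⟨j, hdj, fun l (hl : l ≠ j) => ?_⟩
  rcases h.eq_or_eq_of_flip hd hdj hl with hcq | hcd
  · by_contra hne
    obtain ⟨x, hxc, hxq, hx⟩ :=
      (h.compatible c h.mem).exists_not_selects_letter hne (by rwa [← hcq])
    obtain ⟨v, hv, hvj, hxv⟩ := h.exists_flip hxc hxq
    rw [huniq v hv hvj] at hxv
    exact hx (hxv l hl)
  · exact hcd.symm

theorem flip_eq_of_flip_ne (h : LoneLetter C q c j)
    (hflip : ∀ v ∈ C, v j = (c j)ᶜ → v = d ∨ v = d') {k l : ι} (hk : k ≠ j) (hl : l ≠ j)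
    (hkl : l ≠ k) (hck : c k = q k) (hd'k : d' k ≠ q k) (hcl : c l = q l) : d l = q l := by
  by_contra hdl
  obtain ⟨x, hxc, hxq, hx⟩ := (h.compatible c h.mem).exists_not_selects
    {(l, d l), (k, d' k)} (by grind) (by grind) (by grind)
  obtain ⟨v, hv, hvj, hxv⟩ := h.exists_flip hxc hxq
  rcases hflip v hv hvj with rfl | rfl
  · exact hx l _ (.inl rfl) (hxv l hl)
  · exact hx k _ (.inr rfl) (hxv k hk)

theorem twin_of_flip_pair (h : LoneLetter C q c j) (hd : d ∈ C) (hdj : d j = (c j)ᶜ)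
    (hd' : d' ∈ C) (hd'j : d' j = (c j)ᶜ) (hne : d ≠ d')
    (hflip : ∀ v ∈ C, v j = (c j)ᶜ → v = d ∨ v = d') : Twin d d' := by
  obtain ⟨k, hk⟩ := h.code.dichotomous d' hd' d hd hne.symm
  have hkj : k ≠ j := by
    rintro rfl
    rw [hdj, hd'j] at hk
    exact Letter.compl_ne _ hk.symm
  have hck : c k = q k := by
    have := h.eq_or_eq_of_flip hd hdj hkj
    have := h.eq_or_eq_of_flip hd' hd'j hkj
    grind
  have hdk : d k ≠ q k := fun e => (h.compatible d' hd').ne_compl k (by rw [hk, e])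
  have hd'k : d' k ≠ q k := fun e =>
    (h.compatible d hd).ne_compl k (by rw [← e, hk, Letter.compl_compl])
  refine ⟨k, hk, fun l (hl : l ≠ k) => ?_⟩
  by_cases hlj : l = j
  · rw [hlj, hdj, hd'j]
  by_cases hcl : c l = q l
  · rw [h.flip_eq_of_flip_ne hflip hkj hlj hl hck hd'k hcl,
      h.flip_eq_of_flip_ne (fun v hv hvj => (hflip v hv hvj).symm) hkj hlj hl hck hdk hcl]
  · rw [← (h.eq_or_eq_of_flip hd hdj hlj).resolve_left hcl,
      ← (h.eq_or_eq_of_flip hd' hd'j hlj).resolve_left hcl]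

theorem two_lt_card_flip (h : LoneLetter C q c j) : 2 < (C.filter (· j = (c j)ᶜ)).card := by
  have mem_iff : ∀ {D : Finset (Word ι P)}, C.filter (· j = (c j)ᶜ) = D →
      ∀ v, v ∈ D ↔ v ∈ C ∧ v j = (c j)ᶜ := by
    rintro D rfl v
    exact Finset.mem_filter
  by_contra! hcard
  interval_cases hD : (C.filter (· j = (c j)ᶜ)).card
  · obtain ⟨x, hxc, hxq⟩ := h.compatible c h.mem
    obtain ⟨d, hd, hdj, -⟩ := h.exists_flip hxc hxq
    exact Finset.notMem_empty d ((mem_iff (Finset.card_eq_zero.1 hD) d).2 ⟨hd, hdj⟩)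
  · obtain ⟨d, hD⟩ := Finset.card_eq_one.1 hD
    have hmem := mem_iff hD
    simp only [Finset.mem_singleton] at hmem
    obtain ⟨hd, hdj⟩ := (hmem d).1 rfl
    exact h.code.not_twin c h.mem d hd
      (h.twin_of_flip_unique hd hdj fun v hv hvj => (hmem v).2 ⟨hv, hvj⟩)
  · obtain ⟨d, d', hne, hD⟩ := Finset.card_eq_two.1 hD
    have hmem := mem_iff hD
    simp only [Finset.mem_insert, Finset.mem_singleton] at hmem
    obtain ⟨hd, hdj⟩ := (hmem d).1 (.inl rfl)
    obtain ⟨hd', hd'j⟩ := (hmem d').1 (.inr rfl)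
    exact h.code.not_twin d hd d' hd'
      (h.twin_of_flip_pair hd hdj hd' hd'j hne fun v hv hvj => (hmem v).2 ⟨hv, hvj⟩)

end LoneLetter

theorem Covers.erase {C : Finset (Word ι P)} {q c : Word ι P} (hq : Covers C q)
    (h : ¬ Compatible c q) : Covers (C.erase c) q := fun x hx => by
  obtain ⟨d, hd, hxd⟩ := hq x hx
  exact ⟨d, Finset.mem_erase.2 ⟨fun e => h ⟨x, e ▸ hxd, hx⟩, hd⟩, hxd⟩

theorem Covers.update {C : Finset (Word ι P)} {q : Word ι P} (hq : Covers C q) {j : ι}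
    {l : Letter P} (hl : l.base ≠ (q j).base) (hC : ∀ c ∈ C, (c j).base = l.base) :
    Covers (C.filter (· j = l)) (Function.update q j l) := fun x hx => by
  rw [mem_cylinder_update] at hx
  obtain ⟨c, hc, hxc⟩ := hq (force x j (q j)) ((mem_cylinder_force_iff rfl).2 hx.2)
  rw [mem_cylinder_force_of_base_ne (by rwa [hC c hc])] at hxc
  exact ⟨c, Finset.mem_filter.2 ⟨hc, (hxc j).eq_of_base_eq hx.1 (hC c hc)⟩, hxc⟩

theorem IsTwinFreeCode.exists_base_ne {C : Finset (Word ι P)} (hC : IsTwinFreeCode C)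
    {q c d : Word ι P} (hq : Covers C q) (hc : c ∈ C) (hd : d ∈ C) {j : ι} (hdc : d j = (c j)ᶜ)
    (hj : (c j).base ≠ (q j).base)
    (ih : ∀ D ⊂ C, ∀ q', Covers D q' → q' ∈ D) : ∃ r ∈ C, (r j).base ≠ (c j).base := by
  by_contra! hbase
  have update_mem : ∀ l : Letter P, l.base = (c j).base → (∃ v ∈ C, v j ≠ l) →
      Function.update q j l ∈ C := by
    rintro l hl ⟨v, hv, hvl⟩
    refine Finset.mem_of_mem_filter _ (ih _ (Finset.filter_ssubset.2 ⟨v, hv, hvl⟩) _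
      (hq.update (hl ▸ hj) fun c' hc' => (hbase c' hc').trans hl.symm))
  refine hC.not_twin _ (update_mem (c j) rfl ⟨d, hd, by simp [hdc]⟩) _
    (update_mem (c j)ᶜ rfl ⟨c, hc, by simp⟩) ⟨j, by simp, fun l (hl : l ≠ j) => by simp [hl]⟩

theorem card_filter_add_card_filter_compl_lt {C : Finset (Word ι P)} {r : Word ι P} (hr : r ∈ C)
    {j : ι} {l : Letter P} (hrl : (r j).base ≠ l.base) :
    (C.filter (· j = l)).card + (C.filter (· j = lᶜ)).card < C.card := by
  rw [← Finset.card_union_of_disjoint (Finset.disjoint_filter.2 fun v _ h => by simp [h])]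
  refine Finset.card_lt_card ⟨Finset.union_subset (Finset.filter_subset _ _)
    (Finset.filter_subset _ _), fun h => ?_⟩
  have := h hr
  simp only [Finset.mem_union, Finset.mem_filter] at this
  grind

theorem IsTwinFreeCode.three_lt_card_filter_add_card_filter_compl {C : Finset (Word ι P)}
    (hC : IsTwinFreeCode C) {q v : Word ι P} (hq : Covers C q) (hcompat : ∀ c ∈ C, Compatible c q)
    (hv : v ∈ C) {j : ι} (hvj : (v j).base ≠ (q j).base)
    (hone : (C.filter (· j = v j)).card ≤ 1) :
    3 < (C.filter (· j = v j)).card + (C.filter (· j = (v j)ᶜ)).card := by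
  have hvmem : v ∈ C.filter (· j = v j) := Finset.mem_filter.2 ⟨hv, rfl⟩
  have hpos := Finset.card_pos.2 ⟨v, hvmem⟩
  have hflip := LoneLetter.two_lt_card_flip (q := q) ⟨hC, hq, hcompat, hv, hvj,
    fun u hu huj => Finset.card_le_one.1 hone u (Finset.mem_filter.2 ⟨hu, huj⟩) v hvmem⟩
  omega

theorem IsTwinFreeCode.mem_of_covers {C : Finset (Word ι P)} (hC : IsTwinFreeCode C)
    (hcard : C.card ≤ 4) {q : Word ι P} (hq : Covers C q) : q ∈ C := by
  induction C using Finset.strongInduction generalizing q with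
  | H C ih =>
    have ih : ∀ D ⊂ C, ∀ q', Covers D q' → q' ∈ D := fun D hD q' =>
      ih D hD (hC.mono hD.subset) ((Finset.card_le_card hD.subset).trans hcard)
    by_cases hcompat : ∀ c ∈ C, Compatible c q
    swap
    · push Not at hcompat
      obtain ⟨c, hc, hcq⟩ := hcompat
      exact Finset.mem_of_mem_erase (ih _ (Finset.erase_ssubset hc) q (hq.erase hcq))
    obtain ⟨x, hx⟩ := cylinder_nonempty q
    obtain ⟨c, hc, -⟩ := hq x hx
    by_cases hsingle : ∀ v ∈ C, v = c
    · have hqc : q = c := eq_of_cylinder_subset fun x hx => by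
        obtain ⟨v, hv, hxv⟩ := hq x hx
        rwa [hsingle v hv] at hxv
      rwa [hqc]
    push Not at hsingle
    obtain ⟨d, hd, hdc⟩ := hsingle
    obtain ⟨j, hj⟩ := hC.dichotomous d hd c hc hdc
    have hcj : (c j).base ≠ (q j).base := (hcompat c hc).base_ne fun e =>
      (hcompat d hd).ne_compl j (by rw [hj, e])
    have hc_flip := hC.three_lt_card_filter_add_card_filter_compl hq hcompat hc hcj
    have hd_flip := hC.three_lt_card_filter_add_card_filter_compl hq hcompat hd (j := j)
      (by rwa [hj])
    rw [hj, Letter.compl_compl] at hd_flip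
    obtain ⟨r, hr, hrj⟩ := hC.exists_base_ne hq hc hd hj hcj ih
    have hlt := card_filter_add_card_filter_compl_lt hr hrj
    omega

theorem IsTwinFreeCode.eq_empty_of_coverEq {A : Finset (Word ι P)} (hA : IsTwinFreeCode A)
    (hcard : A.card ≤ 5) {M : Multiset (Word ι P)} (h : CoverEq A.val M)
    (hM : ∀ q ∈ M, q ∉ A) : A = ∅ := by
  have covers : ∀ q ∈ M, Covers A q := fun q hq x hx =>
    h.symm.exists_mem_cylinder hq hx
  have compatible : ∀ q ∈ M, ∀ p ∈ A, Compatible p q := fun q hq p hp => by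
    by_contra hpq
    have hmem := (hA.mono (A.erase_subset p)).mem_of_covers
      (by rw [Finset.card_erase_of_mem hp]; omega) ((covers q hq).erase hpq)
    exact hM q hq (Finset.mem_of_mem_erase hmem)
  by_contra hne
  obtain ⟨p₀, hp₀⟩ := Finset.nonempty_iff_ne_empty.2 hne
  obtain ⟨x₀, hx₀⟩ := cylinder_nonempty p₀
  obtain ⟨q₀, hq₀, -⟩ := h.exists_mem_cylinder hp₀ hx₀
  have hlt : 4 < A.card := not_le.1 fun h4 => hM q₀ hq₀ (hA.mem_of_covers h4 (covers q₀ hq₀))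
  obtain ⟨p, hp, p', hp', hpp'⟩ := Finset.one_lt_card.1 (show 1 < A.card by omega)
  obtain ⟨j, hj⟩ := hA.dichotomous p' hp' p hp hpp'.symm
  have base_ne : ∀ q ∈ M, (q j).base ≠ (p j).base := fun q hq =>
    ((compatible q hq p hp).base_ne fun e =>
      (compatible q hq p' hp').ne_compl j (by rw [hj, e])).symm
  have hflip : Covers (A.erase p) (Function.update p j (p j)ᶜ) := fun x hx => by
    rw [mem_cylinder_update] at hx
    obtain ⟨q, hq, hxq⟩ :=
      h.exists_mem_cylinder hp (x := force x j (p j)) ((mem_cylinder_force_iff rfl).2 hx.2)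
    obtain ⟨c, hc, hxc⟩ := covers q hq x ((mem_cylinder_force_of_base_ne (base_ne q hq)).1 hxq)
    refine ⟨c, Finset.mem_erase.2 ⟨?_, hc⟩, hxc⟩
    rintro rfl
    exact selects_compl.1 hx.1 (hxc j)
  have hmem := (hA.mono (A.erase_subset p)).mem_of_covers
    (by rw [Finset.card_erase_of_mem hp]; omega) hflip
  exact hA.not_twin p hp _ (Finset.mem_of_mem_erase hmem)
    ⟨j, by simp, fun l (hl : l ≠ j) => by simp [hl]⟩

/-! ### Slices and weights -/

/-- The words of `V` whose letter at `i` is `⟨a, f⟩`, with that letter replaced by `⟨a, true⟩` so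
that the slices for `f = true` and `f = false` can be compared. -/
noncomputable def slice (V : Finset (Word ι P)) (i : ι) (a : P) (f : Bool) : Finset (Word ι P) :=
  (V.filter (· i = ⟨a, f⟩)).image (Function.update · i ⟨a, true⟩)

section Slice

variable {V W : Finset (Word ι P)} {i : ι} {a : P} {f : Bool} {u : Word ι P}

theorem mem_slice :
    u ∈ slice V i a f ↔ u i = ⟨a, true⟩ ∧ Function.update u i ⟨a, f⟩ ∈ V := by
  simp only [slice, Finset.mem_image, Finset.mem_filter]
  constructor
  · rintro ⟨v, ⟨hv, hvi⟩, rfl⟩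
    rw [Function.update_idem, ← hvi, Function.update_eq_self]
    exact ⟨Function.update_self .., hv⟩
  · rintro ⟨hu, hmem⟩
    refine ⟨_, ⟨hmem, Function.update_self ..⟩, ?_⟩
    rw [Function.update_idem, ← hu, Function.update_eq_self]

theorem update_mem_slice {v : Word ι P} (hv : v ∈ V) (i : ι) :
    Function.update v i ⟨(v i).base, true⟩ ∈ slice V i (v i).base (v i).sign :=
  mem_slice.2 ⟨Function.update_self .., by
    rw [Function.update_idem]
    exact (Function.update_eq_self i v).symm ▸ hv⟩

theorem slice_val (V : Finset (Word ι P)) (i : ι) (a : P) (f : Bool) :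
    (slice V i a f).val = (fiber V.val i ⟨a, f⟩).map (Function.update · i ⟨a, true⟩) := by
  refine Finset.image_val_of_injOn fun u hu v hv huv => ?_
  have hui := (Finset.mem_filter.1 hu).2
  have hvi := (Finset.mem_filter.1 hv).2
  rw [← Function.update_eq_self i u, ← Function.update_eq_self i v, hui, hvi]
  simpa only [Function.update_idem] using congrArg (Function.update · i (⟨a, f⟩ : Letter P)) huv

theorem card_slice (V : Finset (Word ι P)) (i : ι) (a : P) (f : Bool) :
    (slice V i a f).card = (V.filter (· i = ⟨a, f⟩)).card := by
  rw [← Finset.card_val, slice_val, Multiset.card_map]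
  rfl

theorem card_slice_add_card_slice (V : Finset (Word ι P)) (i : ι) (a : P) :
    (slice V i a true).card + (slice V i a false).card = {v ∈ V | (v i).base = a}.card := by
  rw [card_slice, card_slice, ← Finset.card_union_of_disjoint
    (Finset.disjoint_filter.2 fun v _ h => by simp [h]), ← Finset.filter_or]
  congr! 2 with v
  cases hv : (v i).sign <;> simp [Letter.ext_iff, hv]

theorem IsTwinFreeCode.slice (hV : IsTwinFreeCode V) (i : ι) (a : P) (f : Bool) :
    IsTwinFreeCode (slice V i a f) where
  dichotomous u hu v hv huv := by
    rw [mem_slice] at hu hv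
    obtain ⟨l, hl⟩ := hV.dichotomous _ hu.2 _ hv.2 fun e => huv <| funext fun l => by
      by_cases hli : l = i
      · rw [hli, hu.1, hv.1]
      · simpa [hli] using congrFun e l
    have hli : l ≠ i := by
      rintro rfl
      simp at hl
    exact ⟨l, by simpa [hli] using hl⟩
  not_twin := by
    rintro u hu v hv ⟨k, hk, huv⟩
    rw [mem_slice] at hu hv
    have hki : k ≠ i := by
      rintro rfl
      simp [hu.1, hv.1] at hk
    refine hV.not_twin _ hu.2 _ hv.2 ⟨k, by simpa [hki] using hk, fun l hl => ?_⟩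
    by_cases hli : l = i
    · simp [hli]
    · simpa [hli] using huv hl

theorem IsTwinFreeCode.disjoint_slice_not (hV : IsTwinFreeCode V) (i : ι) (a : P) (f : Bool) :
    Disjoint (PolyboxCode.slice V i a f) (PolyboxCode.slice V i a (!f)) := by
  refine Finset.disjoint_left.2 fun u hu hu' => ?_
  rw [mem_slice] at hu hu'
  exact hV.not_twin _ hu.2 _ hu'.2
    ⟨i, by simp [Letter.ext_iff], fun l (hl : l ≠ i) => by simp [hl]⟩

theorem disjoint_slice (h : Disjoint V W) (i : ι) (a : P) (f : Bool) :
    Disjoint (slice V i a f) (slice W i a f) :=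
  Finset.disjoint_left.2 fun _ hu hu' =>
    Finset.disjoint_left.1 h (mem_slice.1 hu).2 (mem_slice.1 hu').2

theorem CoverEq.slice (h : CoverEq V.val W.val) (i : ι) (a : P) (f : Bool) :
    CoverEq ((slice V i a f).val + (PolyboxCode.slice W i a (!f)).val)
      ((PolyboxCode.slice W i a f).val + (PolyboxCode.slice V i a (!f)).val) := by
  simp only [slice_val, ← Multiset.map_add]
  exact (h.coverEqOff_fiber_add_fiber_compl i ⟨a, f⟩).map_update _

end Slice

/-- The words `u` and `v` differ at a single coordinate, where their letters are not even
complementary. -/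
def SemiTwin (u v : Word ι P) : Prop := ∃ k, (v k).base ≠ (u k).base ∧ Set.EqOn v u {k}ᶜ

theorem exists_ne_of_not_semiTwin {p t : Word ι P} (hne : t ≠ p) (h : ¬ SemiTwin p t) (j : ι) :
    ∃ k, t k ≠ p k ∧ (k = j → t k = (p k)ᶜ) := by
  by_contra! hc
  have eqOn : Set.EqOn t p {j}ᶜ := fun k (hk : k ≠ j) => by_contra fun hkne => hk (hc k hkne).1
  obtain ⟨k, hk⟩ := Function.ne_iff.1 hne
  obtain ⟨rfl, hkc⟩ := hc k hk
  exact h ⟨k, Letter.base_ne_of_ne hk hkc, eqOn⟩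

theorem twin_of_cylinder_subset_union {p q t₁ t₂ : Word ι P}
    (hcov : cylinder p ⊆ cylinder q ∪ (cylinder t₁ ∪ cylinder t₂)) (hq : q ≠ p)
    (h₁ : t₁ ≠ p) (h₂ : t₂ ≠ p) (hs₁ : ¬ SemiTwin p t₁) (hs₂ : ¬ SemiTwin p t₂) :
    Twin t₁ t₂ := by
  obtain ⟨j, hj⟩ := Function.ne_iff.1 hq
  have conflict : ∀ k₁ k₂, t₁ k₁ ≠ p k₁ → t₂ k₂ ≠ p k₂ → j = k₁ ∧ t₁ j = (q j)ᶜ ∨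
      j = k₂ ∧ t₂ j = (q j)ᶜ ∨ k₁ = k₂ ∧ t₂ k₁ = (t₁ k₁)ᶜ := by
    intro k₁ k₂ hk₁ hk₂
    by_contra hc
    obtain ⟨x, hxp, -, hx⟩ := (compatible_self p).exists_not_selects
      {(j, q j), (k₁, t₁ k₁), (k₂, t₂ k₂)} (fun i l => by
        simp only [Set.mem_insert_iff, Set.mem_singleton_iff, Prod.mk.injEq]
        grind) (by grind) (by grind)
    rcases hcov hxp with hxq | hxt | hxt
    · exact hx j _ (.inl rfl) (hxq j)
    · exact hx k₁ _ (.inr (.inl rfl)) (hxt k₁)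
    · exact hx k₂ _ (.inr (.inr rfl)) (hxt k₂)
  obtain ⟨k, hk₁, hkj₁⟩ := exists_ne_of_not_semiTwin h₁ hs₁ j
  obtain ⟨k', hk₂, hkj₂⟩ := exists_ne_of_not_semiTwin h₂ hs₂ j
  obtain ⟨rfl, htk⟩ : k = k' ∧ t₂ k = (t₁ k)ᶜ := by grind
  have hkj : k ≠ j := by grind
  have eq₁ : ∀ i, i ≠ j → i ≠ k → t₁ i = p i := by grind
  have eq₂ : ∀ i, i ≠ j → i ≠ k → t₂ i = p i := by grind
  have htj₁ : t₁ j = (q j)ᶜ := by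
    obtain ⟨i, hi, hik⟩ := exists_ne_of_not_semiTwin h₁ hs₁ k
    grind
  have htj₂ : t₂ j = (q j)ᶜ := by
    obtain ⟨i, hi, hik⟩ := exists_ne_of_not_semiTwin h₂ hs₂ k
    grind
  refine ⟨k, htk, fun i (hi : i ≠ k) => ?_⟩
  by_cases hij : i = j
  · rw [hij, htj₁, htj₂]
  · rw [eq₁ i hij hi, eq₂ i hij hi]

/-- Twin-free codes `V true` and `V false` of at most eleven words each that encode the same
polybox and have no word in common. They arise as the two differences of twin-free codes of the
same polybox, so the theorem says that both are empty. -/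
structure DisjointCodePair (V : Bool → Finset (Word ι P)) : Prop where
  code : ∀ e, IsTwinFreeCode (V e)
  coverEq : ∀ e, CoverEq (V e).val (V !e).val
  disjoint : ∀ e, Disjoint (V e) (V !e)
  card_le : ∀ e, (V e).card ≤ 11

/-- Half the number of words in `V true` and `V false` whose letter at `i` has base `a`. By
`DisjointCodePair.card_slice_add_card_slice_not` it may be counted by any two opposite slices. -/
noncomputable def weight (V : Bool → Finset (Word ι P)) (i : ι) (a : P) : ℕ :=
  (slice (V true) i a true).card + (slice (V false) i a false).card

namespace DisjointCodePair

variable {V : Bool → Finset (Word ι P)} {i : ι} {a : P}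

section Finite

variable [Finite ι]

theorem card_slice_add_card_slice_not (h : DisjointCodePair V) (i : ι) (a : P) (e f : Bool) :
    (slice (V e) i a f).card + (slice (V !e) i a !f).card = weight V i a := by
  have htrue := ((h.coverEq true).slice i a true).card_eq
  simp only [Multiset.card_add, Finset.card_val, Bool.not_true] at htrue
  cases e <;> cases f <;> simp only [weight, Bool.not_true, Bool.not_false] <;> omega

theorem card_filter_base_add (h : DisjointCodePair V) (i : ι) (a : P) :
    {v ∈ V true | (v i).base = a}.card + {v ∈ V false | (v i).base = a}.card =
      2 * weight V i a := by
  have htrue := h.card_slice_add_card_slice_not i a true true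
  have hfalse := h.card_slice_add_card_slice_not i a true false
  simp only [Bool.not_true, Bool.not_false] at htrue hfalse
  rw [← card_slice_add_card_slice, ← card_slice_add_card_slice]
  omega

theorem sum_weight_le (h : DisjointCodePair V) (i : ι) (T : Finset P) :
    ∑ a ∈ T, weight V i a ≤ 11 := by
  have sum_card_le : ∀ e, ∑ a ∈ T, {v ∈ V e | (v i).base = a}.card ≤ 11 := fun e =>
    (Finset.sum_card_fiberwise_eq_card_filter (V e) T fun v => (v i).base).trans_le
      ((Finset.card_filter_le _ _).trans (h.card_le e))
  have hsum : 2 * ∑ a ∈ T, weight V i a = ∑ a ∈ T, {v ∈ V true | (v i).base = a}.card +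
      ∑ a ∈ T, {v ∈ V false | (v i).base = a}.card := by
    rw [Finset.mul_sum, ← Finset.sum_add_distrib]
    exact Finset.sum_congr rfl fun a _ => (h.card_filter_base_add i a).symm
  have := sum_card_le true
  have := sum_card_le false
  omega

theorem slice_nonempty (h : DisjointCodePair V) {e : Bool} {v : Word ι P} (hv : v ∈ V e)
    (hw : weight V i (v i).base ≤ 5) (e' f : Bool) :
    (slice (V e') i (v i).base f).Nonempty := by
  rw [Finset.nonempty_iff_ne_empty]
  intro hempty
  have hcov := ((h.coverEq e').slice i (v i).base f).symm
  have hcard := h.card_slice_add_card_slice_not i (v i).base e' f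
  rw [hempty] at hcov hcard
  rw [Finset.card_empty, zero_add] at hcard
  have hopp : slice (V !e') i (v i).base (!f) = ∅ := by
    refine ((h.code _).slice i _ _).eq_empty_of_coverEq (hcard ▸ hw)
      (M := (slice (V !e') i (v i).base f).val + (slice (V e') i (v i).base !f).val)
      (by simpa using hcov.symm) fun q hq => ?_
    rcases Multiset.mem_add.1 hq with hq | hq
    · exact Finset.disjoint_left.1 ((h.code _).disjoint_slice_not i _ _) hq
    · exact Finset.disjoint_left.1 (disjoint_slice (h.disjoint _) i _ _) hq
  have hv' := Finset.card_pos.2 ⟨_, update_mem_slice hv i⟩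
  have := h.card_slice_add_card_slice_not i (v i).base e (v i).sign
  rw [hopp, Finset.card_empty] at hcard
  omega

theorem card_slice_le_four (h : DisjointCodePair V) {e : Bool} {v : Word ι P} (hv : v ∈ V e)
    (hw : weight V i (v i).base ≤ 5) (e' f : Bool) :
    (slice (V e') i (v i).base f).card ≤ 4 := by
  have := Finset.card_pos.2 (h.slice_nonempty hv hw (!e') (!f))
  have := h.card_slice_add_card_slice_not i (v i).base e' f
  omega

theorem five_lt_weight (h : DisjointCodePair V) {e : Bool} {v w : Word ι P} (hv : v ∈ V e)
    (hw : w ∈ V !e) (hi : (w i).base ≠ (v i).base) (hvw : Set.EqOn w v {i}ᶜ) :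
    5 < weight V i (w i).base := by
  by_contra! hweight
  set D := (V !e).filter (· i = (w i)ᶜ) with hD
  have hDcard : D.card ≤ 4 := by
    rw [hD, ← show (⟨(w i).base, !(w i).sign⟩ : Letter P) = (w i)ᶜ from rfl, ← card_slice]
    exact h.card_slice_le_four hw hweight _ _
  have hcov : Covers D (Function.update w i (w i)ᶜ) := fun x hx => by
    obtain ⟨hxi, hxw⟩ := mem_cylinder_update.1 hx
    obtain ⟨c, hc, hxc⟩ := (h.coverEq e).exists_mem_cylinder hv (x := force x i (v i))
      ((mem_cylinder_force_iff rfl).2 (cylinderOff_congr hvw ▸ hxw))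
    by_cases hci : (c i).base = (w i).base
    · rw [mem_cylinder_force_of_base_ne (by rwa [hci])] at hxc
      exact ⟨c, Finset.mem_filter.2 ⟨hc, (hxc i).eq_of_base_eq hxi hci⟩, hxc⟩
    · have hcw : c = w := (h.code _).eq_of_compatible hc hw ⟨force (force x i (v i)) i (w i),
        (mem_cylinder_force_of_base_ne hci).2 hxc,
        (mem_cylinder_force_iff rfl).2 (mem_cylinderOff_force.2 hxw)⟩
      exact absurd (hcw ▸ rfl) hci
  have hmem := ((h.code _).mono (Finset.filter_subset _ _)).mem_of_covers hDcard hcov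
  exact (h.code _).not_twin w hw _ (Finset.mem_of_mem_filter _ hmem)
    ⟨i, by simp, fun l (hl : l ≠ i) => by simp [hl]⟩

theorem not_semiTwin (h : DisjointCodePair V) {e : Bool} {v w : Word ι P} (hv : v ∈ V e)
    (hw : w ∈ V !e) : ¬ SemiTwin v w := by
  rintro ⟨i, hi, hvw⟩
  have := h.five_lt_weight hv hw hi hvw
  have := h.five_lt_weight hw (by rwa [Bool.not_not]) hi.symm hvw.symm
  have := h.sum_weight_le i {(w i).base, (v i).base}
  rw [Finset.sum_pair hi] at this
  omega

theorem not_semiTwin_slice (h : DisjointCodePair V) {e f : Bool} {u v : Word ι P}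
    (hu : u ∈ slice (V e) i a f) (hv : v ∈ slice (V !e) i a f) : ¬ SemiTwin u v := by
  rintro ⟨k, hk, huv⟩
  rw [mem_slice] at hu hv
  have hki : k ≠ i := by
    rintro rfl
    simp [hu.1, hv.1] at hk
  refine h.not_semiTwin hu.2 hv.2 ⟨k, by simpa [hki] using hk, fun l hl => ?_⟩
  by_cases hli : l = i
  · simp [hli]
  · simpa [hli] using huv hl

theorem two_lt_card_slice (h : DisjointCodePair V) {e f : Bool}
    (hone : (slice (V e) i a !f).card = 1) (hp : (slice (V e) i a f).Nonempty)
    (ht : (slice (V !e) i a f).Nonempty) : 2 < (slice (V !e) i a f).card := by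
  by_contra! htwo
  obtain ⟨q, hq⟩ := Finset.card_eq_one.1 hone
  obtain ⟨p, hp⟩ := hp
  obtain ⟨t₁, t₂, hT⟩ : ∃ t₁ t₂, slice (V !e) i a f = {t₁, t₂} := by
    rcases Nat.le_succ_iff.1 htwo with hle | htwo
    · obtain ⟨t, ht⟩ := Finset.card_eq_one.1 (hle.antisymm (Finset.card_pos.2 ht))
      exact ⟨t, t, by simp [ht]⟩
    · obtain ⟨t₁, t₂, -, hT⟩ := Finset.card_eq_two.1 htwo
      exact ⟨t₁, t₂, hT⟩
  have ht₁ : t₁ ∈ slice (V !e) i a f := by simp [hT]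
  have ht₂ : t₂ ∈ slice (V !e) i a f := by simp [hT]
  have hcov : cylinder p ⊆ cylinder q ∪ (cylinder t₁ ∪ cylinder t₂) := fun x hx => by
    obtain ⟨w, hw, hxw⟩ := ((h.coverEq e).slice i a f).exists_mem_cylinder
      (Multiset.mem_add.2 (.inl hp)) hx
    rw [Multiset.mem_add, Finset.mem_val, Finset.mem_val, hT, hq] at hw
    simp only [Finset.mem_insert, Finset.mem_singleton] at hw
    rcases hw with (rfl | rfl) | rfl
    · exact .inr (.inl hxw)
    · exact .inr (.inr hxw)
    · exact .inl hxw
  have ne_p : ∀ t ∈ slice (V !e) i a f, t ≠ p := by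
    rintro t ht rfl
    exact Finset.disjoint_left.1 (disjoint_slice (h.disjoint e) i a f) hp ht
  have hqp : q ≠ p := by
    rintro rfl
    exact Finset.disjoint_left.1 ((h.code e).disjoint_slice_not i a f) hp (by simp [hq])
  exact ((h.code _).slice i a f).not_twin t₁ ht₁ t₂ ht₂ (twin_of_cylinder_subset_union hcov hqp
    (ne_p t₁ ht₁) (ne_p t₂ ht₂) (h.not_semiTwin_slice hp ht₁) (h.not_semiTwin_slice hp ht₂))

theorem three_lt_weight (h : DisjointCodePair V) {e : Bool} {v : Word ι P} (hv : v ∈ V e)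
    (i : ι) : 3 < weight V i (v i).base := by
  by_contra! hw
  have hne := h.slice_nonempty hv (hw.trans (by norm_num))
  have htrue := Finset.card_pos.2 (hne true true)
  have hfalse := Finset.card_pos.2 (hne false false)
  have hlt : (slice (V true) i (v i).base true).card = 1 →
      2 < (slice (V false) i (v i).base false).card := fun hone =>
    h.two_lt_card_slice (e := true) (f := false) hone (hne _ _) (hne _ _)
  have hlt' : (slice (V false) i (v i).base false).card = 1 →
      2 < (slice (V true) i (v i).base true).card := fun hone =>
    h.two_lt_card_slice (e := false) (f := true) hone (hne _ _) (hne _ _)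
  rw [weight] at hw
  omega

theorem base_eq_or_eq (h : DisjointCodePair V) {e₁ e₂ e₃ : Bool} {u v w : Word ι P}
    (hu : u ∈ V e₁) (hv : v ∈ V e₂) (huv : (u i).base ≠ (v i).base) (hw : w ∈ V e₃) :
    (w i).base = (u i).base ∨ (w i).base = (v i).base := by
  by_contra! hne
  have := h.three_lt_weight hu i
  have := h.three_lt_weight hv i
  have := h.three_lt_weight hw i
  have := h.sum_weight_le i {(w i).base, (u i).base, (v i).base}
  rw [Finset.sum_insert (by simp [hne]), Finset.sum_pair huv] at this
  omega

end Finite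

theorem exists_compatible_dichotomous (h : DisjointCodePair V) {e f : Bool}
    (hcard : (slice (V !e) i a f).card ≤ 4) {p : Word ι P} (hp : p ∈ slice (V e) i a f) :
    ∃ w, Compatible w p ∧ ∀ g, ∀ t ∈ slice (V !e) i a g, Dichotomous w t := by
  have hcov : ¬ Covers (slice (V !e) i a f) p := fun hcov =>
    Finset.disjoint_left.1 (disjoint_slice (h.disjoint e) i a f) hp
      (((h.code _).slice i a f).mem_of_covers hcard hcov)
  simp only [Covers, not_forall, not_exists, not_and] at hcov
  obtain ⟨x, hxp, hx⟩ := hcov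
  obtain ⟨hpi, hpV⟩ := mem_slice.1 hp
  obtain ⟨w, hw, hxw⟩ := (h.coverEq e).exists_mem_cylinder hpV (x := force x i ⟨a, f⟩)
    (mem_cylinder_update.2 ⟨selects_force_self .., mem_cylinderOff_force.2 fun l _ => hxp l⟩)
  have hxw' : x ∈ cylinder (Function.update w i ⟨a, true⟩) := mem_cylinder_update.2
    ⟨hpi ▸ hxp i, mem_cylinderOff_force.1 ((mem_cylinder_iff_mem_cylinderOff i).1 hxw).2⟩
  have hwi : (w i).base ≠ a := fun hwa => by
    have hwi := (hxw i).eq_of_base_eq (selects_force_self ..) hwa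
    refine hx _ (mem_slice.2 ⟨Function.update_self .., ?_⟩) hxw'
    rwa [Function.update_idem, ← hwi, Function.update_eq_self]
  refine ⟨_, ⟨x, hxw', hxp⟩, fun g t ht => ?_⟩
  obtain ⟨l, hl⟩ := (h.code _).dichotomous w hw _ (mem_slice.1 ht).2 fun hwt => hwi (by simp [hwt])
  have hli : l ≠ i := by
    rintro rfl
    simp [hl] at hwi
  exact ⟨l, by simpa [hli] using hl⟩

end DisjointCodePair

theorem Compatible.eq_compl_or_of_dichotomous {w z c : Word ι P} {j k : ι} (hwz : Compatible w z)
    (hwc : Dichotomous w c) (hoff : ∀ i ≠ j, i ≠ k → c i = z i) :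
    w j = (c j)ᶜ ∨ w k = (c k)ᶜ := by
  obtain ⟨i, hi⟩ := hwc
  by_cases hij : i = j
  · exact .inl (hij ▸ hi)
  by_cases hik : i = k
  · exact .inr (hik ▸ hi)
  · exact absurd (hoff i hij hik ▸ hi) (hwz.ne_compl i)

/-! ### Bases of small weight -/

/-- The words of a set of tagged words, with multiplicity. -/
def words (T : Finset (Bool × Word ι P)) : Multiset (Word ι P) := T.val.map Prod.snd

/-- The slices of a disjoint code pair over a base of small weight, arranged as the two sides
`S true` and `S false` of a balanced equation; the tag of a word records the code it comes from.
The word `w` in `exists_compatible` arises from a word of the other code with another base at the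
slicing coordinate; it exists because the other slice, of at most four words, does not cover `z`. -/
structure CriticalPair (S : Bool → Finset (Bool × Word ι P)) : Prop where
  coverEq : ∀ s, CoverEq (words (S s)) (words (S !s))
  dichotomous : ∀ {s}, ∀ z ∈ S s, ∀ z' ∈ S s, z.1 = z'.1 → z ≠ z' → Dichotomous z.2 z'.2
  tag_ne_of_twin : ∀ {s}, ∀ z ∈ S s, ∀ z' ∈ S s, Twin z.2 z'.2 → z.1 ≠ z'.1
  word_ne : ∀ {s}, ∀ z ∈ S s, ∀ z' ∈ S !s, z.2 ≠ z'.2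
  tag_eq_of_semiTwin : ∀ {s}, ∀ z ∈ S s, ∀ z' ∈ S !s, SemiTwin z.2 z'.2 → z.1 = z'.1
  exists_compatible : ∀ {s}, ∀ z ∈ S s, ∃ w, Compatible w z.2 ∧
    ∀ s', ∀ z' ∈ S s', z'.1 ≠ z.1 → Dichotomous w z'.2
  card_le : ∀ s, (S s).card ≤ 5
  base_eq_or_eq : ∀ {i s₁ s₂ s₃}, ∀ u ∈ S s₁, ∀ v ∈ S s₂, (u.2 i).base ≠ (v.2 i).base →
    ∀ w ∈ S s₃, (w.2 i).base = (u.2 i).base ∨ (w.2 i).base = (v.2 i).base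

namespace CriticalPair

variable {S : Bool → Finset (Bool × Word ι P)} {s : Bool} {j k : ι}
  {p p' q q' u v v' z : Bool × Word ι P}

theorem not_semiTwin_of_twin (h : CriticalPair S) (hp : p ∈ S s) (hp' : p' ∈ S s)
    (hpp' : Twin p.2 p'.2) (hv : v ∈ S !s) (hpv : SemiTwin p.2 v.2) : ¬ SemiTwin p'.2 v.2 :=
  fun hpv' => h.tag_ne_of_twin p hp p' hp' hpp' <|
    (h.tag_eq_of_semiTwin p hp v hv hpv).trans (h.tag_eq_of_semiTwin p' hp' v hv hpv').symm

theorem not_eqOn (h : CriticalPair S) (hp : p ∈ S s) (hv : v ∈ S !s) (hj : v.2 j = p.2 j) :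
    ¬ Set.EqOn v.2 p.2 {j}ᶜ := fun hpv => h.word_ne p hp v hv <| funext fun i => by
  by_cases hi : i = j
  · rw [hi, hj]
  · exact (hpv hi).symm

theorem not_eqOn_of_compl (h : CriticalPair S) (hp : p ∈ S s) (hp' : p' ∈ S s)
    (hj : p'.2 j = (p.2 j)ᶜ) (hpp' : Set.EqOn p'.2 p.2 {j}ᶜ) (hv : v ∈ S !s)
    (hvj : (v.2 j).base ≠ (p.2 j).base) : ¬ Set.EqOn v.2 p.2 {j}ᶜ := fun hpv =>
  h.not_semiTwin_of_twin hp hp' ⟨j, hj, hpp'⟩ hv ⟨j, hvj, hpv⟩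
    ⟨j, by rwa [hj], hpv.trans hpp'.symm⟩

theorem not_coverEqOff_pair (h : CriticalPair S) (hp : p ∈ S s) (hp' : p' ∈ S s) (hv : v ∈ S !s)
    (hpj : p.2 j = v.2 j) (hp'j : p'.2 j = v.2 j) (w : Word ι P) :
    ¬ CoverEqOff j {p.2, p'.2} {v.2, w} := fun hcov => by
  rcases pair_eqOn_or_of_coverEqOff hcov with ⟨heq, -⟩ | ⟨-, heq⟩ | ⟨k, -, hk, hp'k, -, hoff⟩
  · exact h.not_eqOn hp hv hpj.symm heq
  · exact h.not_eqOn hp' hv hp'j.symm heq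
  · have hoff' : ∀ i ≠ k, p'.2 i = p.2 i ∧ v.2 i = p.2 i := fun i hi => by
      by_cases hij : i = j
      · rw [hij, hpj, hp'j]
        exact ⟨rfl, rfl⟩
      · exact ⟨(hoff i hij hi).1, (hoff i hij hi).2.1⟩
    exact h.not_semiTwin_of_twin hp hp' ⟨k, hp'k, fun i hi => (hoff' i hi).1⟩ hv
      ⟨k, hk, fun i hi => (hoff' i hi).2⟩
      ⟨k, by rwa [hp'k], fun i hi => (hoff' i hi).2.trans (hoff' i hi).1.symm⟩

theorem apply_eq_of_tag_ne (h : CriticalPair S) {s₁ s₂ s₃ : Bool} {t a b : Bool × Word ι P}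
    (hz : z ∈ S s) (ht : t ∈ S s₁) (ha : a ∈ S s₂) (hb : b ∈ S s₃)
    (htz : t.1 ≠ z.1) (haz : a.1 ≠ z.1) (hbz : b.1 ≠ z.1)
    (htj : t.2 j = z.2 j) (htk : t.2 k = (z.2 k)ᶜ)
    (hak : (a.2 k).base ≠ (z.2 k).base) (hbk : (b.2 k).base ≠ (z.2 k).base)
    (hoff : ∀ i ≠ j, i ≠ k → t.2 i = z.2 i ∧ a.2 i = z.2 i ∧ b.2 i = z.2 i) :
    a.2 j = b.2 j := by
  obtain ⟨w, hwz, hw⟩ := h.exists_compatible z hz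
  have hwk : w k = z.2 k := by
    rcases hwz.eq_compl_or_of_dichotomous (hw _ t ht htz) fun i hj hk => (hoff i hj hk).1 with
      hwt | hwt
    · exact absurd (htj ▸ hwt) (hwz.ne_compl j)
    · rw [hwt, htk, Letter.compl_compl]
  have hwa : w j = (a.2 j)ᶜ := (hwz.eq_compl_or_of_dichotomous (hw _ a ha haz) fun i hj hk =>
    (hoff i hj hk).2.1).resolve_right fun e => hak (by rw [← hwk, e, Letter.compl_base])
  have hwb : w j = (b.2 j)ᶜ := (hwz.eq_compl_or_of_dichotomous (hw _ b hb hbz) fun i hj hk =>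
    (hoff i hj hk).2.2).resolve_right fun e => hbk (by rw [← hwk, e, Letter.compl_base])
  exact Letter.compl_inj.1 (hwa.symm.trans hwb)

theorem tag_ne_of_compl (h : CriticalPair S) (hp : p ∈ S s) (hp' : p' ∈ S s)
    (hj : p'.2 j = p.2 j) (hk : p'.2 k = (p.2 k)ᶜ)
    (hoff : ∀ i ≠ j, i ≠ k → p'.2 i = p.2 i) : p.1 ≠ p'.1 :=
  h.tag_ne_of_twin p hp p' hp' ⟨k, hk, fun i (hi : i ≠ k) => by grind⟩

theorem tag_eq_of_base_ne (h : CriticalPair S) (hp : p ∈ S s) (hv : v ∈ S !s)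
    (hj : v.2 j = p.2 j) (hk : (v.2 k).base ≠ (p.2 k).base)
    (hoff : ∀ i ≠ j, i ≠ k → v.2 i = p.2 i) : p.1 = v.1 :=
  h.tag_eq_of_semiTwin p hp v hv ⟨k, hk, fun i (hi : i ≠ k) => by grind⟩

theorem tag_ne_of_base_ne (h : CriticalPair S) (hp : p ∈ S s) (hp' : p' ∈ S s)
    (hj : (p'.2 j).base ≠ (p.2 j).base) (hk : (p'.2 k).base ≠ (p.2 k).base)
    (hoff : ∀ i ≠ j, i ≠ k → p'.2 i = p.2 i) : p.1 ≠ p'.1 := fun htag => by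
  obtain ⟨i, hi⟩ := h.dichotomous p hp p' hp' htag (by grind)
  by_cases hij : i = j
  · grind
  by_cases hik : i = k <;> grind

theorem not_coverEqOff_of_twins (h : CriticalPair S) (hp : p ∈ S s) (hp' : p' ∈ S s)
    (hq : q ∈ S s) (hq' : q' ∈ S s) (hv : v ∈ S !s) (hv' : v' ∈ S !s)
    (hp'j : p'.2 j = p.2 j) (hqj : q.2 j = (p.2 j)ᶜ) (hq'j : q'.2 j = (p.2 j)ᶜ)
    (hvj : (v.2 j).base ≠ (p.2 j).base) (hv'j : v'.2 j = v.2 j)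
    (hpq : Set.EqOn q.2 p.2 {j}ᶜ) (hpq' : Set.EqOn q'.2 p'.2 {j}ᶜ) :
    ¬ CoverEqOff j {p.2, p'.2} {v.2, v'.2} := fun hcov => by
  rcases pair_eqOn_or_of_coverEqOff hcov with ⟨heq, -⟩ | ⟨heq, -⟩ | ⟨k, hkj, hk, hp'k, hv'k, hoff⟩
  · exact h.not_eqOn_of_compl hp hq hqj hpq hv hvj heq
  · exact h.not_eqOn_of_compl hp hq hqj hpq hv' (by rwa [hv'j]) heq
  have hpp' : p.1 ≠ p'.1 :=
    h.tag_ne_of_compl hp hp' hp'j hp'k fun i hij hik => (hoff i hij hik).1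
  have hp'q' : p'.1 ≠ q'.1 := h.tag_ne_of_twin p' hp' q' hq' ⟨j, by rw [hq'j, hp'j], hpq'⟩
  have hvv' : v.1 ≠ v'.1 := h.tag_ne_of_compl hv hv' hv'j hv'k fun i hij hik => by
    rw [(hoff i hij hik).2.1, (hoff i hij hik).2.2]
  have hpq'tag : p.1 = q'.1 := (Bool.eq_not.2 hpp').trans (Bool.eq_not.2 hp'q'.symm).symm
  have hq'k : q'.2 k = (p.2 k)ᶜ := by rw [hpq' hkj, hp'k]
  have hq'off : ∀ i ≠ j, i ≠ k → q'.2 i = p.2 i := fun i hij hik => by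
    rw [hpq' hij, (hoff i hij hik).1]
  have tag_eq : ∀ z ∈ S !s, ∀ t ∈ S !s, t.1 ≠ z.1 → t.2 j = z.2 j → t.2 k = (z.2 k)ᶜ →
      (p.2 k).base ≠ (z.2 k).base → (∀ i ≠ j, i ≠ k → z.2 i = p.2 i ∧ t.2 i = p.2 i) →
      p.1 = z.1 := by
    intro z hz t ht htz htj htk hpk hoffz
    by_contra hpz
    have := h.apply_eq_of_tag_ne hz ht hp hq' htz hpz (by rwa [← hpq'tag]) htj htk hpk
      (by rwa [hq'k]) (by grind)
    grind
  have := tag_eq v hv v' hv' (by grind) (by grind) (by grind) (by grind) (by grind)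
  have := tag_eq v' hv' v hv (by grind) (by grind) (by grind) (by grind) (by grind)
  grind

theorem false_of_crossed (h : CriticalPair S) {s₁ s₂ : Bool} (hp : p ∈ S s₁) (hp' : p' ∈ S s₁)
    (hq : q ∈ S s₁) (hq' : q' ∈ S s₁) (hv : v ∈ S s₂)
    (hp'tag : p'.1 ≠ p.1) (hqtag : q.1 = p.1) (hq'tag : q'.1 ≠ p.1) (hvtag : v.1 ≠ p.1)
    (hp'j : p'.2 j = p.2 j) (hqj : q.2 j = (p.2 j)ᶜ) (hq'j : q'.2 j = (p.2 j)ᶜ)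
    (hvj : (v.2 j).base ≠ (p.2 j).base) (hqk : (q.2 k).base ≠ (p.2 k).base)
    (hp'k : p'.2 k = (p.2 k)ᶜ) (hq'k : q'.2 k = (q.2 k)ᶜ)
    (hoff : ∀ i ≠ j, i ≠ k → p'.2 i = p.2 i ∧ q.2 i = p.2 i ∧ q'.2 i = p.2 i)
    (hvoff : ∀ i ≠ j, i ≠ k → v.2 i = p.2 i) : False := by
  by_cases hvk : (v.2 k).base = (p.2 k).base
  · have := h.apply_eq_of_tag_ne (j := j) hq hq' hp' hv (by rwa [hqtag]) (by rwa [hqtag])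
      (by rwa [hqtag]) (by grind) hq'k (by grind) (by grind) (by grind)
    grind
  · have := h.apply_eq_of_tag_ne (j := j) hp hp' hq' hv hp'tag hq'tag hvtag hp'j hp'k (by grind)
      hvk (by grind)
    grind

theorem not_coverEqOff_of_crossed (h : CriticalPair S) (hp : p ∈ S s) (hp' : p' ∈ S s)
    (hq : q ∈ S s) (hq' : q' ∈ S s) (hv : v ∈ S !s) (hv' : v' ∈ S !s)
    (hp'j : p'.2 j = p.2 j) (hqj : q.2 j = (p.2 j)ᶜ) (hq'j : q'.2 j = (p.2 j)ᶜ)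
    (hvj : (v.2 j).base ≠ (p.2 j).base) (hv'j : v'.2 j = v.2 j)
    (hkj : k ≠ j) (hqk : (q.2 k).base ≠ (p.2 k).base) (hp'k : p'.2 k = (p.2 k)ᶜ)
    (hq'k : q'.2 k = (q.2 k)ᶜ)
    (hoff : ∀ i ≠ j, i ≠ k → p'.2 i = p.2 i ∧ q.2 i = p.2 i ∧ q'.2 i = p.2 i) :
    ¬ CoverEqOff j {p.2, p'.2} {v.2, v'.2} := fun hcov => by
  have hvv' : v'.2 k = (v.2 k)ᶜ ∧ ∀ i ≠ j, i ≠ k → v.2 i = p.2 i ∧ v'.2 i = p.2 i := by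
    rcases pair_eqOn_or_of_coverEqOff hcov with
      ⟨hvp, hvp'⟩ | ⟨hvp, hvp'⟩ | ⟨k', hk'j, -, hp'k', hv'k', hoff'⟩
    · exact ⟨by rw [hvp hkj, hvp' hkj, hp'k], fun i hij hik =>
        ⟨hvp hij, (hvp' hij).trans (hoff i hij hik).1⟩⟩
    · exact ⟨by rw [hvp hkj, hvp' hkj, hp'k, Letter.compl_compl], fun i hij hik =>
        ⟨(hvp' hij).trans (hoff i hij hik).1, hvp hij⟩⟩
    · obtain rfl : k' = k := by
        by_contra hne
        have := hoff k' hk'j hne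
        grind
      exact ⟨hv'k', fun i hij hik => (hoff' i hij hik).2⟩
  have hp'tag : p'.1 ≠ p.1 :=
    (h.tag_ne_of_compl hp hp' hp'j hp'k fun i hij hik => (hoff i hij hik).1).symm
  have hqtag : q.1 ≠ q'.1 := h.tag_ne_of_compl hq hq' (by rw [hqj, hq'j]) hq'k (by grind)
  have hvtag : v.1 ≠ v'.1 := h.tag_ne_of_compl hv hv' hv'j hvv'.1 (by grind)
  obtain ⟨w, hw, hwtag, hwj, hwoff⟩ : ∃ w ∈ S !s, w.1 ≠ p.1 ∧ w.2 j = v.2 j ∧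
      ∀ i ≠ j, i ≠ k → w.2 i = p.2 i := by
    by_cases hvp : v.1 = p.1
    · exact ⟨v', hv', by grind, hv'j, fun i hij hik => (hvv'.2 i hij hik).2⟩
    · exact ⟨v, hv, hvp, rfl, fun i hij hik => (hvv'.2 i hij hik).1⟩
  by_cases hqp : q.1 = p.1
  · exact h.false_of_crossed hp hp' hq hq' hw hp'tag hqp (by grind) hwtag hp'j hqj hq'j
      (by rwa [hwj]) hqk hp'k hq'k hoff hwoff
  · have hq'p : q'.1 = p.1 := (Bool.eq_not.2 hqtag.symm).trans (Bool.eq_not.2 (Ne.symm hqp)).symm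
    exact h.false_of_crossed (k := k) hp hp' hq' hq hw hp'tag hq'p hqp hwtag hp'j hq'j hqj
      (by rwa [hwj]) (by grind) hp'k (by grind) (by grind) hwoff

theorem not_coverEqOff_of_four_pairs (h : CriticalPair S) (hp : p ∈ S s) (hp' : p' ∈ S s)
    (hq : q ∈ S s) (hq' : q' ∈ S s) (hv : v ∈ S !s) (hv' : v' ∈ S !s)
    (hp'j : p'.2 j = p.2 j) (hqj : q.2 j = (p.2 j)ᶜ) (hq'j : q'.2 j = (p.2 j)ᶜ)
    (hvj : (v.2 j).base ≠ (p.2 j).base) (hv'j : v'.2 j = v.2 j)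
    (hcov : CoverEqOff j {p.2, p'.2} {q.2, q'.2}) :
    ¬ CoverEqOff j {p.2, p'.2} {v.2, v'.2} := by
  rcases pair_eqOn_or_of_coverEqOff hcov with
    ⟨hpq, hpq'⟩ | ⟨hpq, hpq'⟩ | ⟨k, hkj, hqk, hp'k, hq'k, hoff⟩
  · exact h.not_coverEqOff_of_twins hp hp' hq hq' hv hv' hp'j hqj hq'j hvj hv'j hpq hpq'
  · exact h.not_coverEqOff_of_twins hp hp' hq' hq hv hv' hp'j hq'j hqj hvj hv'j hpq hpq'
  · exact h.not_coverEqOff_of_crossed hp hp' hq hq' hv hv' hp'j hqj hq'j hvj hv'j hkj hqk hp'k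
      hq'k hoff

theorem not_coverEqOff_of_opposite_twins (h : CriticalPair S) (hp : p ∈ S s) (hp' : p' ∈ S s)
    (hu : u ∈ S s) (hq : q ∈ S !s) (hq' : q' ∈ S !s) (hv : v ∈ S !s)
    (hp'j : p'.2 j = (p.2 j)ᶜ) (hqj : q.2 j = p.2 j) (hq'j : q'.2 j = (p.2 j)ᶜ)
    (huj : (u.2 j).base ≠ (p.2 j).base) (hvj : v.2 j = u.2 j)
    (hpp' : Set.EqOn p'.2 p.2 {j}ᶜ) (hqq' : Set.EqOn q.2 q'.2 {j}ᶜ) :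
    ¬ CoverEqOff j {p.2, u.2} {q.2, v.2} := fun hcov => by
  rcases pair_eqOn_or_of_coverEqOff hcov with
    ⟨heq, -⟩ | ⟨hpv, -⟩ | ⟨k, hkj, hk, huk, hvk, hoff⟩
  · exact h.not_eqOn hp hq hqj heq
  · exact h.not_eqOn_of_compl hp hp' hp'j hpp' hv (by rwa [hvj]) hpv
  have huv : u.1 = v.1 :=
    h.tag_eq_of_base_ne (j := j) (k := k) hu hv hvj (by rwa [hvk, huk]) (by grind)
  have hqq'tag : q.1 ≠ q'.1 :=
    h.tag_ne_of_twin q hq q' hq' ⟨j, by rw [hq'j, hqj], hqq'.symm⟩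
  have tag_eq : ∀ z ∈ S !s, ∀ t ∈ S !s, t.1 ≠ z.1 → t.2 j = (z.2 j)ᶜ →
      (p.2 j).base = (z.2 j).base → Set.EqOn t.2 z.2 {j}ᶜ → Set.EqOn z.2 q.2 {j}ᶜ →
      u.1 = z.1 := by
    intro z hz t ht htz htj hzj htoff hzoff
    by_contra huz
    have := h.apply_eq_of_tag_ne (j := k) (k := j) hz ht hu hv htz huz (by rwa [← huv])
      (htoff hkj) htj (by rwa [← hzj]) (by rwa [hvj, ← hzj]) fun i hik hij =>
        ⟨htoff hij, by rw [hzoff hij]; grind, by rw [hzoff hij]; grind⟩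
    grind
  have := tag_eq q hq q' hq' hqq'tag.symm (by grind) (by grind) hqq'.symm fun _ _ => rfl
  have := tag_eq q' hq' q hq hqq'tag (by grind) (by grind) hqq' hqq'.symm
  grind

theorem not_coverEqOff_of_opposite_crossed (h : CriticalPair S) (hp : p ∈ S s) (hp' : p' ∈ S s)
    (hu : u ∈ S s) (hq : q ∈ S !s) (hq' : q' ∈ S !s) (hv : v ∈ S !s)
    (hp'j : p'.2 j = (p.2 j)ᶜ) (hqj : q.2 j = p.2 j) (hq'j : q'.2 j = (p.2 j)ᶜ)
    (huj : (u.2 j).base ≠ (p.2 j).base) (hvj : v.2 j = u.2 j)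
    (hkj : k ≠ j) (hqk : (q.2 k).base ≠ (p.2 k).base) (hq'k : q'.2 k = (p.2 k)ᶜ)
    (hp'k : p'.2 k = (q.2 k)ᶜ)
    (hoff : ∀ i ≠ j, i ≠ k → q'.2 i = p.2 i ∧ q.2 i = p.2 i ∧ p'.2 i = p.2 i) :
    ¬ CoverEqOff j {p.2, u.2} {q.2, v.2} := fun hcov => by
  rcases pair_eqOn_or_of_coverEqOff hcov with
    ⟨heq, -⟩ | ⟨hpv, -⟩ | ⟨k', hk'j, hk', huk, -, hoff'⟩
  · exact h.not_eqOn hp hq hqj heq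
  · have hpqtag : p.1 = q.1 := h.tag_eq_of_base_ne (j := j) hp hq hqj hqk (by grind)
    have hpvtag : p.1 = v.1 := h.tag_eq_of_semiTwin p hp v hv ⟨j, by rwa [hvj], hpv⟩
    refine h.tag_ne_of_base_ne (j := j) (k := k) hq hv (by grind) ?_ ?_ (by grind)
    · rw [hpv hkj]
      exact hqk.symm
    · intro i hij hik
      rw [hpv hij]
      grind
  · obtain rfl : k' = k := by
      by_contra hne
      have := hoff k' hk'j hne
      grind
    have hpqtag' : p'.1 = q'.1 :=
      h.tag_eq_of_base_ne (j := j) (k := k') hp' hq' (by grind) (by grind) (by grind)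
    have huq'tag : u.1 = q'.1 := h.tag_eq_of_semiTwin u hu q' hq'
      ⟨j, by grind, fun i (hij : i ≠ j) => by by_cases hik : i = k' <;> grind⟩
    exact h.tag_ne_of_base_ne (j := j) (k := k') hp' hu (by grind) (by grind) (by grind)
      (hpqtag'.trans huq'tag.symm)

theorem not_coverEqOff_of_opposite_pairs (h : CriticalPair S) (hp : p ∈ S s) (hp' : p' ∈ S s)
    (hu : u ∈ S s) (hq : q ∈ S !s) (hq' : q' ∈ S !s) (hv : v ∈ S !s)
    (hp'j : p'.2 j = (p.2 j)ᶜ) (hqj : q.2 j = p.2 j) (hq'j : q'.2 j = (p.2 j)ᶜ)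
    (huj : (u.2 j).base ≠ (p.2 j).base) (hvj : v.2 j = u.2 j)
    (hcov : CoverEqOff j {p.2, q'.2} {q.2, p'.2}) :
    ¬ CoverEqOff j {p.2, u.2} {q.2, v.2} := by
  rcases pair_eqOn_or_of_coverEqOff hcov with
    ⟨heq, -⟩ | ⟨hpp', hqq'⟩ | ⟨k, hkj, hqk, hq'k, hp'k, hoff⟩
  · exact absurd heq (h.not_eqOn hp hq hqj)
  · exact h.not_coverEqOff_of_opposite_twins hp hp' hu hq hq' hv hp'j hqj hq'j huj hvj hpp' hqq'
  · exact h.not_coverEqOff_of_opposite_crossed hp hp' hu hq hq' hv hp'j hqj hq'j huj hvj hkj hqk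
      hq'k hp'k hoff

end CriticalPair

/-- The tagged words whose letter at the coordinate `j` is `l`. -/
noncomputable def taggedFiber (T : Finset (Bool × Word ι P)) (j : ι) (l : Letter P) :
    Finset (Bool × Word ι P) := {z ∈ T | z.2 j = l}

theorem mem_taggedFiber {T : Finset (Bool × Word ι P)} {j : ι} {l : Letter P}
    {z : Bool × Word ι P} : z ∈ taggedFiber T j l ↔ z ∈ T ∧ z.2 j = l :=
  Finset.mem_filter

theorem words_taggedFiber (T : Finset (Bool × Word ι P)) (j : ι) (l : Letter P) :
    words (taggedFiber T j l) = fiber (words T) j l := by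
  rw [words, taggedFiber, Finset.filter_val, fiber, words, Multiset.filter_map]
  rfl

theorem card_words (T : Finset (Bool × Word ι P)) : (words T).card = T.card :=
  Multiset.card_map _ _

theorem words_empty : words (∅ : Finset (Bool × Word ι P)) = 0 := rfl

theorem words_singleton (z : Bool × Word ι P) : words {z} = {z.2} := rfl

theorem words_pair {z z' : Bool × Word ι P} (h : z ≠ z') : words {z, z'} = {z.2, z'.2} := by
  rw [words, Finset.insert_val_of_notMem (Finset.notMem_singleton.2 h), Multiset.map_cons]
  rfl

theorem mem_words {T : Finset (Bool × Word ι P)} {v : Word ι P} :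
    v ∈ words T ↔ ∃ z ∈ T, z.2 = v :=
  Multiset.mem_map

theorem card_taggedFiber_add_eq {T : Finset (Bool × Word ι P)} {j : ι} {l m : Letter P}
    (hlm : l.base ≠ m.base) (hT : ∀ z ∈ T, (z.2 j).base = l.base ∨ (z.2 j).base = m.base) :
    (taggedFiber T j l).card + (taggedFiber T j lᶜ).card +
      ((taggedFiber T j m).card + (taggedFiber T j mᶜ).card) = T.card := by
  have card_add : ∀ l', (taggedFiber T j l').card + (taggedFiber T j l'ᶜ).card =
      {z ∈ T | (z.2 j).base = l'.base}.card := fun l' => by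
    rw [taggedFiber, taggedFiber,
      ← Finset.card_union_of_disjoint (Finset.disjoint_filter.2 (by grind)), ← Finset.filter_or]
    congr 1
    refine Finset.filter_congr fun z _ => ⟨?_, Letter.eq_or_eq_compl_of_base_eq⟩
    rintro (h | h) <;> simp [h]
  rw [card_add, card_add, ← Finset.card_union_of_disjoint (Finset.disjoint_filter.2 (by grind)),
    ← Finset.filter_or, Finset.filter_true_of_mem hT]

namespace CriticalPair

variable {S : Bool → Finset (Bool × Word ι P)} {s : Bool} {j : ι} {l m : Letter P}

theorem coverEqOff_taggedFiber_compl (h : CriticalPair S) (s : Bool) (j : ι) (l : Letter P) :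
    CoverEqOff j (words (taggedFiber (S s) j l) + words (taggedFiber (S !s) j lᶜ))
      (words (taggedFiber (S !s) j l) + words (taggedFiber (S s) j lᶜ)) := by
  simpa only [words_taggedFiber] using (h.coverEq s).coverEqOff_fiber_add_fiber_compl j l

theorem coverEqOff_taggedFiber (h : CriticalPair S) (s : Bool) (hlm : l.base ≠ m.base)
    (hS : ∀ s, ∀ z ∈ S s, (z.2 j).base = l.base ∨ (z.2 j).base = m.base) :
    CoverEqOff j (words (taggedFiber (S s) j l) + words (taggedFiber (S s) j m))
      (words (taggedFiber (S !s) j l) + words (taggedFiber (S !s) j m)) := by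
  simp only [words_taggedFiber]
  exact (h.coverEq s).coverEqOff_fiber_add_fiber hlm
    (fun v hv => by obtain ⟨z, hz, rfl⟩ := mem_words.1 hv; exact hS s z hz)
    (fun v hv => by obtain ⟨z, hz, rfl⟩ := mem_words.1 hv; exact hS _ z hz)

section Finite

variable [Finite ι]

theorem card_taggedFiber_add_compl (h : CriticalPair S) (s : Bool) (j : ι) (l : Letter P) :
    (taggedFiber (S s) j l).card + (taggedFiber (S !s) j lᶜ).card =
      (taggedFiber (S !s) j l).card + (taggedFiber (S s) j lᶜ).card := by
  simpa only [Multiset.card_add, card_words] using (h.coverEqOff_taggedFiber_compl s j l).card_eq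

theorem card_taggedFiber_add_of_base_ne (h : CriticalPair S) (s : Bool) (hlm : l.base ≠ m.base)
    (hS : ∀ s, ∀ z ∈ S s, (z.2 j).base = l.base ∨ (z.2 j).base = m.base) :
    (taggedFiber (S s) j l).card + (taggedFiber (S s) j m).card =
      (taggedFiber (S !s) j l).card + (taggedFiber (S !s) j m).card := by
  simpa only [Multiset.card_add, card_words] using (h.coverEqOff_taggedFiber s hlm hS).card_eq

theorem not_coverEqOff_taggedFiber_of_mem (h : CriticalPair S)
    (hcard : (taggedFiber (S s) j l).card ≤ 2) {v : Bool × Word ι P}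
    (hv : v ∈ taggedFiber (S !s) j l) {N : Multiset (Word ι P)} (hvN : v.2 ∈ N) :
    ¬ CoverEqOff j (words (taggedFiber (S s) j l)) N := fun hcov => by
  obtain ⟨N, rfl⟩ := Multiset.exists_cons_of_mem hvN
  have hcardN := hcov.card_eq
  rw [card_words, Multiset.card_cons] at hcardN
  obtain ⟨hvS, hvj⟩ := mem_taggedFiber.1 hv
  rcases show N.card = 0 ∨ N.card = 1 by omega with h0 | h1
  · obtain ⟨p, hp⟩ := Finset.card_eq_one.1 (hcardN.trans (by rw [h0]))
    obtain ⟨hpS, hpj⟩ := mem_taggedFiber.1 (hp ▸ Finset.mem_singleton_self p)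
    rw [hp, words_singleton, Multiset.card_eq_zero.1 h0] at hcov
    exact h.not_eqOn hpS hvS (hvj.trans hpj.symm) (eqOn_of_coverEqOff_singleton hcov).symm
  · obtain ⟨w, rfl⟩ := Multiset.card_eq_one.1 h1
    obtain ⟨p, p', hne, hp⟩ := Finset.card_eq_two.1 (hcardN.trans (by rw [h1]))
    obtain ⟨hpS, hpj⟩ := mem_taggedFiber.1 (hp ▸ Finset.mem_insert_self p {p'})
    obtain ⟨hp'S, hp'j⟩ := mem_taggedFiber.1
      (hp ▸ Finset.mem_insert_of_mem (Finset.mem_singleton_self p'))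
    rw [hp, words_pair hne] at hcov
    exact h.not_coverEqOff_pair hpS hp'S hvS (hpj.trans hvj.symm) (hp'j.trans hvj.symm) w hcov

theorem card_taggedFiber_eq_zero (h : CriticalPair S)
    (hcard : (taggedFiber (S s) j l).card ≤ 2)
    (hzero : (taggedFiber (S !s) j lᶜ).card = 0) : (taggedFiber (S !s) j l).card = 0 := by
  by_contra hne
  obtain ⟨v, hv⟩ := Finset.card_pos.1 (Nat.pos_of_ne_zero hne)
  have hcov := h.coverEqOff_taggedFiber_compl s j l
  rw [Finset.card_eq_zero.1 hzero, words_empty, add_zero] at hcov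
  exact h.not_coverEqOff_taggedFiber_of_mem hcard hv
    (Multiset.mem_add.2 (.inl (mem_words.2 ⟨v, hv, rfl⟩))) hcov

theorem not_coverEqOff_taggedFiber_of_base_ne (h : CriticalPair S) (hlm : l.base ≠ m.base)
    (hpos : 0 < (taggedFiber (S s) j l).card) (hcard : (taggedFiber (S s) j l).card ≤ 2)
    (hcovc : CoverEqOff j (words (taggedFiber (S s) j l)) (words (taggedFiber (S s) j lᶜ))) :
    ¬ CoverEqOff j (words (taggedFiber (S s) j l)) (words (taggedFiber (S !s) j m)) := by
  intro hcov
  have hcardm := hcov.card_eq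
  have hcardc := hcovc.card_eq
  simp only [card_words] at hcardm hcardc
  rcases show (taggedFiber (S s) j l).card = 1 ∨ (taggedFiber (S s) j l).card = 2 by omega with
    hone | htwo
  · obtain ⟨p, hp⟩ := Finset.card_eq_one.1 hone
    obtain ⟨q, hq⟩ := Finset.card_eq_one.1 (hcardc.symm.trans hone)
    obtain ⟨v, hv⟩ := Finset.card_eq_one.1 (hcardm.symm.trans hone)
    rw [hp, hv, words_singleton, words_singleton] at hcov
    rw [hp, hq, words_singleton, words_singleton] at hcovc
    simp only [taggedFiber, Finset.ext_iff, Finset.mem_filter, Finset.mem_singleton] at hp hq hv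
    exact h.not_eqOn_of_compl (s := s) (by grind) (by grind) (by grind)
      (eqOn_of_coverEqOff_singleton hcovc).symm (by grind) (by grind)
      (eqOn_of_coverEqOff_singleton hcov).symm
  · obtain ⟨p, p', hpne, hp⟩ := Finset.card_eq_two.1 htwo
    obtain ⟨q, q', hqne, hq⟩ := Finset.card_eq_two.1 (hcardc.symm.trans htwo)
    obtain ⟨v, v', hvne, hv⟩ := Finset.card_eq_two.1 (hcardm.symm.trans htwo)
    rw [hp, hv, words_pair hpne, words_pair hvne] at hcov
    rw [hp, hq, words_pair hpne, words_pair hqne] at hcovc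
    simp only [taggedFiber, Finset.ext_iff, Finset.mem_filter, Finset.mem_insert,
      Finset.mem_singleton] at hp hq hv
    exact h.not_coverEqOff_of_four_pairs (s := s) (by grind) (by grind) (by grind) (by grind)
      (by grind) (by grind) (by grind) (by grind) (by grind) (by grind) (by grind) hcovc hcov

theorem false_of_card_taggedFiber_eq_zero (h : CriticalPair S) (hlm : l.base ≠ m.base)
    (hS : ∀ s, ∀ z ∈ S s, (z.2 j).base = l.base ∨ (z.2 j).base = m.base)
    (hpos : 0 < (taggedFiber (S s) j l).card) (hl : (taggedFiber (S !s) j l).card = 0)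
    (hlc : (taggedFiber (S !s) j lᶜ).card = 0) (hm : (taggedFiber (S !s) j m).card ≤ 2) :
    False := by
  have hcov := h.coverEqOff_taggedFiber s hlm hS
  have hcovc := h.coverEqOff_taggedFiber_compl s j l
  rw [Finset.card_eq_zero.1 hl, words_empty, zero_add] at hcov hcovc
  rw [Finset.card_eq_zero.1 hlc, words_empty, add_zero] at hcovc
  have hmzero : taggedFiber (S s) j m = ∅ := Finset.eq_empty_of_forall_notMem fun v hv =>
    h.not_coverEqOff_taggedFiber_of_mem hm (by rwa [Bool.not_not])
      (Multiset.mem_add.2 (.inr (mem_words.2 ⟨v, hv, rfl⟩))) hcov.symm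
  rw [hmzero, words_empty, add_zero] at hcov
  have hcard := hcov.card_eq
  simp only [card_words] at hcard
  exact h.not_coverEqOff_taggedFiber_of_base_ne hlm hpos (hcard.trans_le hm) hcovc hcov

theorem false_of_card_taggedFiber_eq_one (h : CriticalPair S) (hlm : l.base ≠ m.base)
    (hS : ∀ s, ∀ z ∈ S s, (z.2 j).base = l.base ∨ (z.2 j).base = m.base)
    (hl : ∀ s, (taggedFiber (S s) j l).card = 1) (hlc : ∀ s, (taggedFiber (S s) j lᶜ).card = 1)
    (hm : (taggedFiber (S s) j m).card ≤ 1) : False := by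
  have hcov := h.coverEqOff_taggedFiber s hlm hS
  have hcovc := h.coverEqOff_taggedFiber_compl s j l
  have hcard := h.card_taggedFiber_add_of_base_ne s hlm hS
  rw [hl s, hl (!s), Nat.add_left_cancel_iff] at hcard
  obtain ⟨p, hp⟩ := Finset.card_eq_one.1 (hl s)
  obtain ⟨q, hq⟩ := Finset.card_eq_one.1 (hl !s)
  obtain ⟨p', hp'⟩ := Finset.card_eq_one.1 (hlc s)
  obtain ⟨q', hq'⟩ := Finset.card_eq_one.1 (hlc !s)
  rcases Nat.le_one_iff_eq_zero_or_eq_one.1 hm with hzero | hone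
  · rw [Finset.card_eq_zero.1 hzero, Finset.card_eq_zero.1 (hcard.symm.trans hzero), words_empty,
      add_zero, add_zero] at hcov
    exact h.not_coverEqOff_taggedFiber_of_mem ((hl s).trans_le one_le_two)
      (hq ▸ Finset.mem_singleton_self q) (mem_words.2 ⟨q, hq ▸ Finset.mem_singleton_self q, rfl⟩)
      hcov
  · obtain ⟨u, hu⟩ := Finset.card_eq_one.1 hone
    obtain ⟨v, hv⟩ := Finset.card_eq_one.1 (hcard.symm.trans hone)
    rw [hp, hq, hu, hv] at hcov
    rw [hp, hq, hp', hq'] at hcovc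
    simp only [words_singleton, Multiset.singleton_add, ← Multiset.insert_eq_cons] at hcov hcovc
    simp only [taggedFiber, Finset.ext_iff, Finset.mem_filter, Finset.mem_singleton]
      at hp hq hp' hq' hu hv
    exact h.not_coverEqOff_of_opposite_pairs (s := s) (by grind) (by grind) (by grind) (by grind)
      (by grind) (by grind) (by grind) (by grind) (by grind) (by grind) (by grind) hcovc hcov

theorem false_of_card_taggedFiber_add_le_two (h : CriticalPair S) (hlm : l.base ≠ m.base)
    (hS : ∀ s, ∀ z ∈ S s, (z.2 j).base = l.base ∨ (z.2 j).base = m.base)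
    (hpos : 0 < (taggedFiber (S s) j l).card)
    (hle : (taggedFiber (S s) j l).card + (taggedFiber (S !s) j lᶜ).card ≤ 2) : False := by
  have hcompl := h.card_taggedFiber_add_compl s j l
  have hsum := fun s => (card_taggedFiber_add_eq hlm (hS s)).trans_le (h.card_le s)
  have hlmc : l.base ≠ mᶜ.base := hlm
  have hSc : ∀ s, ∀ z ∈ S s, (z.2 j).base = l.base ∨ (z.2 j).base = mᶜ.base := hS
  have zero_iff : (taggedFiber (S !s) j lᶜ).card = 0 ↔ (taggedFiber (S !s) j l).card = 0 :=
    ⟨h.card_taggedFiber_eq_zero (by omega), fun h0 => h.card_taggedFiber_eq_zero (by omega)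
      (by rwa [Letter.compl_compl])⟩
  by_cases hzero : (taggedFiber (S !s) j l).card = 0
  · have hsum' := hsum !s
    rcases show (taggedFiber (S !s) j m).card ≤ 2 ∨ (taggedFiber (S !s) j mᶜ).card ≤ 2 by omega
      with hm | hm
    · exact h.false_of_card_taggedFiber_eq_zero hlm hS hpos hzero (zero_iff.2 hzero) hm
    · exact h.false_of_card_taggedFiber_eq_zero hlmc hSc hpos hzero (zero_iff.2 hzero) hm
  · have hlcpos : 0 < (taggedFiber (S s) j lᶜ).card := Nat.pos_of_ne_zero fun h0 => by
      have := h.card_taggedFiber_eq_zero (s := !s) (j := j) (l := l) (by omega)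
        (by rwa [Bool.not_not])
      rw [Bool.not_not] at this
      omega
    have hne := mt zero_iff.1 hzero
    have hl : ∀ s', (taggedFiber (S s') j l).card = 1 := fun s' => by
      rcases Bool.eq_or_eq_not s' s with rfl | rfl <;> omega
    have hlc : ∀ s', (taggedFiber (S s') j lᶜ).card = 1 := fun s' => by
      rcases Bool.eq_or_eq_not s' s with rfl | rfl <;> omega
    have hsum' := hsum s
    rw [hl, hlc] at hsum'
    rcases show (taggedFiber (S s) j m).card ≤ 1 ∨ (taggedFiber (S s) j mᶜ).card ≤ 1 by omega
      with hm | hm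
    · exact h.false_of_card_taggedFiber_eq_one hlm hS hl hlc hm
    · exact h.false_of_card_taggedFiber_eq_one hlmc hSc hl hlc hm

theorem base_eq_base (h : CriticalPair S) {p q : Bool × Word ι P} (hp : p ∈ S s) (hq : q ∈ S !s)
    (j : ι) : (p.2 j).base = (q.2 j).base := by
  by_contra hpq
  have hS : ∀ s, ∀ z ∈ S s, (z.2 j).base = (p.2 j).base ∨ (z.2 j).base = (q.2 j).base :=
    fun s z hz => h.base_eq_or_eq p hp q hq hpq z hz
  have hsum := (card_taggedFiber_add_eq hpq (hS s)).trans_le (h.card_le s)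
  have hsum' := (card_taggedFiber_add_eq hpq (hS !s)).trans_le (h.card_le !s)
  have hcompl := h.card_taggedFiber_add_compl s j (p.2 j)
  have hcompl' := h.card_taggedFiber_add_compl s j (q.2 j)
  rcases show (taggedFiber (S s) j (p.2 j)).card + (taggedFiber (S !s) j (p.2 j)ᶜ).card ≤ 2 ∨
      (taggedFiber (S !s) j (q.2 j)).card + (taggedFiber (S s) j (q.2 j)ᶜ).card ≤ 2 by omega
    with hle | hle
  · exact h.false_of_card_taggedFiber_add_le_two hpq hS
      (Finset.card_pos.2 ⟨p, mem_taggedFiber.2 ⟨hp, rfl⟩⟩) hle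
  · exact h.false_of_card_taggedFiber_add_le_two (Ne.symm hpq) (fun s z hz => (hS s z hz).symm)
      (Finset.card_pos.2 ⟨q, mem_taggedFiber.2 ⟨hq, rfl⟩⟩) (by rwa [Bool.not_not])

theorem eq_empty (h : CriticalPair S) (s : Bool) : S s = ∅ :=
  Finset.eq_empty_of_forall_notMem fun p hp => by
    obtain ⟨x, hx⟩ := cylinder_nonempty p.2
    obtain ⟨w, hw, hxw⟩ := (h.coverEq s).exists_mem_cylinder (mem_words.2 ⟨p, hp, rfl⟩) hx
    obtain ⟨q, hq, rfl⟩ := mem_words.1 hw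
    exact h.word_ne p hp q hq <| funext fun j =>
      (hx j).eq_of_base_eq (hxw j) (h.base_eq_base hp hq j)

end Finite

end CriticalPair

/-- One side of the equation that `CoverEq.slice` gives for `V true` and `V false`: the slices
of the two codes for opposite signs, each word tagged with its code. -/
noncomputable def taggedSlice (V : Bool → Finset (Word ι P)) (i : ι) (a : P) (s : Bool) :
    Finset (Bool × Word ι P) :=
  ((slice (V true) i a !s).map ⟨Prod.mk true, Prod.mk_right_injective true⟩).disjUnion
    ((slice (V false) i a s).map ⟨Prod.mk false, Prod.mk_right_injective false⟩)
    (by simp [Finset.disjoint_left])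

section TaggedSlice

variable {V : Bool → Finset (Word ι P)} {i : ι} {a : P} {s : Bool}

theorem mem_taggedSlice {z : Bool × Word ι P} :
    z ∈ taggedSlice V i a s ↔ z.2 ∈ slice (V z.1) i a (xor z.1 s) := by
  obtain ⟨e, v⟩ := z
  cases e <;> simp [taggedSlice]

theorem words_taggedSlice (V : Bool → Finset (Word ι P)) (i : ι) (a : P) (s : Bool) :
    words (taggedSlice V i a s) = (slice (V true) i a !s).val + (slice (V false) i a s).val := by
  rw [words, taggedSlice, Finset.disjUnion_val, Multiset.map_add, Finset.map_val, Finset.map_val,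
    Multiset.map_map, Multiset.map_map]
  exact congrArg₂ _ (Multiset.map_id _) (Multiset.map_id _)

end TaggedSlice

namespace DisjointCodePair

variable {V : Bool → Finset (Word ι P)} {i : ι}

theorem word_ne_of_mem_taggedSlice (h : DisjointCodePair V) {a : P} {s : Bool}
    {z z' : Bool × Word ι P} (hz : z ∈ taggedSlice V i a s) (hz' : z' ∈ taggedSlice V i a !s) :
    z.2 ≠ z'.2 := fun heq => by
  rw [mem_taggedSlice] at hz hz'
  rw [← heq] at hz'
  rcases Bool.eq_or_eq_not z'.1 z.1 with htag | htag
  · rw [htag, Bool.xor_not] at hz'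
    exact Finset.disjoint_left.1 ((h.code _).disjoint_slice_not i a _) hz hz'
  · rw [htag, Bool.not_xor_not] at hz'
    exact Finset.disjoint_left.1 (disjoint_slice (h.disjoint _) i a _) hz hz'

theorem base_eq_or_eq_of_mem_slice [Finite ι] (h : DisjointCodePair V) {a : P} {k : ι}
    {e₁ e₂ e₃ f₁ f₂ f₃ : Bool} {u v w : Word ι P} (hu : u ∈ slice (V e₁) i a f₁)
    (hv : v ∈ slice (V e₂) i a f₂) (huv : (u k).base ≠ (v k).base)
    (hw : w ∈ slice (V e₃) i a f₃) :
    (w k).base = (u k).base ∨ (w k).base = (v k).base := by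
  rw [mem_slice] at hu hv hw
  have hki : k ≠ i := by
    rintro rfl
    simp [hu.1, hv.1] at huv
  simpa [hki] using h.base_eq_or_eq (i := k) hu.2 hv.2 (by simpa [hki] using huv) hw.2

theorem criticalPair_taggedSlice [Finite ι] (h : DisjointCodePair V) {e : Bool} {v : Word ι P}
    (hv : v ∈ V e) (hw : weight V i (v i).base ≤ 5) :
    CriticalPair (taggedSlice V i (v i).base) where
  coverEq s := by
    have hcov := (h.coverEq true).slice i (v i).base (!s)
    rw [words_taggedSlice, words_taggedSlice, add_comm (slice _ _ _ (!!s)).val]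
    simpa only [Bool.not_not, Bool.not_true] using hcov
  dichotomous {s} z hz z' hz' htag hne := by
    rw [mem_taggedSlice] at hz hz'
    rw [← htag] at hz'
    exact ((h.code _).slice i _ _).dichotomous _ hz _ hz' fun heq => hne (Prod.ext htag heq)
  tag_ne_of_twin {s} z hz z' hz' htwin htag := by
    rw [mem_taggedSlice] at hz hz'
    rw [← htag] at hz'
    exact ((h.code _).slice i _ _).not_twin _ hz _ hz' htwin
  word_ne {s} z hz z' hz' := h.word_ne_of_mem_taggedSlice hz hz'
  tag_eq_of_semiTwin {s} z hz z' hz' hsemi := by_contra fun htag => by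
    rw [mem_taggedSlice] at hz hz'
    rw [Bool.eq_not.2 (Ne.symm htag), Bool.not_xor_not] at hz'
    exact h.not_semiTwin_slice hz hz' hsemi
  exists_compatible {s} z hz := by
    obtain ⟨w, hwz, hdich⟩ := h.exists_compatible_dichotomous
      (h.card_slice_le_four hv hw _ _) (mem_taggedSlice.1 hz)
    refine ⟨w, hwz, fun s' z' hz' htag => hdich (xor z'.1 s') z'.2 ?_⟩
    rw [← Bool.eq_not.2 htag]
    exact mem_taggedSlice.1 hz'
  card_le s := by
    rw [← card_words, words_taggedSlice, Multiset.card_add, Finset.card_val, Finset.card_val]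
    simpa using (h.card_slice_add_card_slice_not i (v i).base true (!s)).trans_le hw
  base_eq_or_eq {k s₁ s₂ s₃} z hz z' hz' hbase z'' hz'' := by
    rw [mem_taggedSlice] at hz hz' hz''
    exact h.base_eq_or_eq_of_mem_slice hz hz' hbase hz''

theorem five_lt_weight_of_mem [Finite ι] (h : DisjointCodePair V) {e : Bool} {v : Word ι P}
    (hv : v ∈ V e) (i : ι) : 5 < weight V i (v i).base := by
  by_contra! hw
  obtain ⟨u, hu⟩ := h.slice_nonempty hv hw true true
  have hmem : (true, u) ∈ taggedSlice V i (v i).base false := mem_taggedSlice.2 hu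
  rw [(h.criticalPair_taggedSlice hv hw).eq_empty false] at hmem
  exact Finset.notMem_empty _ hmem

theorem eq_empty [Finite ι] (h : DisjointCodePair V) (e : Bool) : V e = ∅ :=
  Finset.eq_empty_of_forall_notMem fun v hv => by
    obtain ⟨x, hx⟩ := cylinder_nonempty v
    obtain ⟨w, hw, hxw⟩ := (h.coverEq e).exists_mem_cylinder hv hx
    have hvw : v ≠ w := fun heq => Finset.disjoint_left.1 (h.disjoint e) hv (heq ▸ hw)
    obtain ⟨i, hi⟩ := Function.ne_iff.1 hvw
    have hbase : (v i).base ≠ (w i).base := fun hb => hi ((hx i).eq_of_base_eq (hxw i) hb)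
    have hsum := h.sum_weight_le i {(v i).base, (w i).base}
    rw [Finset.sum_pair hbase] at hsum
    have := h.five_lt_weight_of_mem hv i
    have := h.five_lt_weight_of_mem hw i
    omega

end DisjointCodePair

/-! ### Codes of at most eleven words -/

theorem IsTwinFreeCode.eq_of_coverEq [Finite ι] {V W : Finset (Word ι P)} (hV : IsTwinFreeCode V)
    (hW : IsTwinFreeCode W) (hcov : CoverEq V.val W.val) (hcard : V.card ≤ 11) : V = W := by
  have count_sdiff : ∀ (A B : Finset (Word ι P)) (x), count (A \ B).val x + count (A ∩ B).val x =
      count A.val x := fun A B x => by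
    rw [← count_add, ← Finset.disjUnion_val _ _ (Finset.disjoint_sdiff_inter A B),
      Finset.disjUnion_eq_union, Finset.sdiff_union_inter]
  have hsdiff : CoverEq (V \ W).val (W \ V).val := fun x => by
    have hVx := count_sdiff V W x
    have hWx := count_sdiff W V x
    rw [Finset.inter_comm] at hWx
    have := hcov x
    omega
  have hpair : DisjointCodePair fun e => if e then V \ W else W \ V :=
    { code := by
        rintro (_ | _)
        exacts [hW.mono Finset.sdiff_subset, hV.mono Finset.sdiff_subset]
      coverEq := by
        rintro (_ | _)
        exacts [hsdiff.symm, hsdiff]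
      disjoint := by
        rintro (_ | _)
        exacts [disjoint_sdiff_sdiff, disjoint_sdiff_sdiff]
      card_le := by
        rintro (_ | _)
        exacts [(Finset.card_le_card Finset.sdiff_subset).trans (hcov.card_eq.symm.trans_le hcard),
          (Finset.card_le_card Finset.sdiff_subset).trans hcard] }
  exact (Finset.sdiff_eq_empty_iff_subset.1 (hpair.eq_empty true)).antisymm
    (Finset.sdiff_eq_empty_iff_subset.1 (hpair.eq_empty false))

theorem IsTwinFreeCode.count_le_one {V : Finset (Word ι P)} (hV : IsTwinFreeCode V)
    (x : Point ι P) : count V.val x ≤ 1 := by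
  rw [count, Multiset.countP_eq_card_filter, ← Finset.filter_val, Finset.card_val,
    Finset.card_le_one]
  intro u hu v hv
  rw [Finset.mem_filter] at hu hv
  exact hV.eq_of_compatible hu.1 hv.1 ⟨x, hu.2, hv.2⟩

theorem IsTwinFreeCode.count_le {V W : Finset (Word ι P)} (hV : IsTwinFreeCode V)
    {x : Point ι P} (h : (∃ v ∈ V, x ∈ cylinder v) → ∃ w ∈ W, x ∈ cylinder w) :
    count V.val x ≤ count W.val x := by
  rcases Nat.eq_zero_or_pos (count V.val x) with hzero | hpos
  · exact hzero ▸ Nat.zero_le _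
  · exact (hV.count_le_one x).trans (count_pos.2 (h (count_pos.1 hpos)))

/-! ### Suits as codes -/

/-- The predicate `e` chooses exactly one set from every complementary pair `{A, Aᶜ}`. Membership
of a fixed point is such a choice, and a family of choices plays the role of a point of the
universal box. -/
def IsChoice {T : Type*} (e : Set T → Prop) : Prop := ∀ A, e Aᶜ ↔ ¬ e A

theorem IsChoice.exists_of_sUnion_eq {T : Type*} {𝒜 ℬ : Set (Set T)} {e : Set T → Prop}
    (he : IsChoice e) (h𝒜 : 𝒜.Pairwise fun A B => A = Bᶜ) (hℬ : ℬ.Pairwise fun A B => A = Bᶜ)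
    (hne : ∀ A ∈ 𝒜, A.Nonempty) (huniv : ∀ B ∈ ℬ, B ≠ Set.univ) (hU : ⋃₀ 𝒜 = ⋃₀ ℬ)
    (h : ∃ A ∈ 𝒜, e A) : ∃ B ∈ ℬ, e B := by
  obtain ⟨A, hA, heA⟩ := h
  obtain ⟨x, hx⟩ := hne A hA
  obtain ⟨B, hB, -⟩ : x ∈ ⋃₀ ℬ := hU ▸ ⟨A, hA, hx⟩
  by_contra! hno
  have hℬB : ⋃₀ ℬ ⊆ B := Set.sUnion_subset fun B' hB' => by
    by_cases heq : B' = B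
    · exact heq.le
    · exact absurd (hℬ hB' hB heq ▸ (he B).2 (hno B hB)) (hno B' hB')
  have h𝒜B : ∀ A' ∈ 𝒜, A' ⊆ B := fun A' hA' =>
    (Set.subset_sUnion_of_mem hA').trans (hU.trans_subset hℬB)
  have hBA : B ⊆ A := fun y hy => by
    obtain ⟨A', hA', hyA'⟩ : y ∈ ⋃₀ 𝒜 := hU ▸ ⟨B, hB, hy⟩
    by_contra hyA
    have hcompl : A' = Aᶜ := h𝒜 hA' hA fun heq => hyA (heq ▸ hyA')
    refine huniv B hB (Set.univ_subset_iff.1 ?_)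
    rw [← Set.union_compl_self A, ← hcompl]
    exact Set.union_subset (h𝒜B A hA) (h𝒜B A' hA')
  exact hno B hB ((h𝒜B A hA).antisymm hBA ▸ heA)

section Boxes

variable {d : ℕ} {X : Fin d → Type*} {𝓕 𝓖 : Set (∀ i, Set (X i))}

/-- The factors at the coordinate `i` of the boxes of `𝓕` whose other factors are chosen by
`E`. -/
def sectionAt (𝓕 : Set (∀ i, Set (X i))) (E : ∀ i, Set (X i) → Prop) (i : Fin d) :
    Set (Set (X i)) :=
  (fun K => K i) '' {K ∈ 𝓕 | ∀ l ≠ i, E l (K l)}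

theorem exists_mem_forall_update {E : ∀ i, Set (X i) → Prop} {i : Fin d} {p : Set (X i) → Prop} :
    (∃ K ∈ 𝓕, ∀ l, Function.update E i p l (K l)) ↔ ∃ A ∈ sectionAt 𝓕 E i, p A := by
  rw [sectionAt, Set.exists_mem_image]
  refine exists_congr fun K => ?_
  rw [Function.forall_update_iff E fun l e => e (K l), Set.mem_ofPred_eq, and_assoc,
    and_comm (a := p _)]

theorem pairwise_sectionAt (h𝓕 : 𝓕.Pairwise BoxDichotomous) {E : ∀ i, Set (X i) → Prop}
    (hE : ∀ i, IsChoice (E i)) (i : Fin d) :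
    (sectionAt 𝓕 E i).Pairwise fun A B => A = Bᶜ := by
  rintro _ ⟨K, ⟨hK, hKE⟩, rfl⟩ _ ⟨G, ⟨hG, hGE⟩, rfl⟩ hne
  obtain ⟨l, hl⟩ := h𝓕 hK hG fun heq => hne (congrFun heq i)
  by_cases hli : l = i
  · exact hli ▸ hl
  · exact absurd (hGE l hli) ((hE l _).1 (hl ▸ hKE l hli))

theorem exists_forall_choice_of_sUnion_sectionAt_eq (h𝓕 : 𝓕.Pairwise BoxDichotomous)
    (h𝓖 : 𝓖.Pairwise BoxDichotomous) (h𝓕p : ∀ K ∈ 𝓕, IsProperBox K)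
    (h𝓖p : ∀ K ∈ 𝓖, IsProperBox K) {E : ∀ i, Set (X i) → Prop} (hE : ∀ i, IsChoice (E i))
    {i : Fin d} (hU : ⋃₀ sectionAt 𝓕 E i = ⋃₀ sectionAt 𝓖 E i)
    (h : ∃ K ∈ 𝓕, ∀ l, E l (K l)) : ∃ K ∈ 𝓖, ∀ l, E l (K l) := by
  rw [← Function.update_eq_self i E, exists_mem_forall_update] at h ⊢
  refine (hE i).exists_of_sUnion_eq (pairwise_sectionAt h𝓕 hE i) (pairwise_sectionAt h𝓖 hE i)
    ?_ ?_ hU h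
  · rintro _ ⟨K, hK, rfl⟩
    exact (h𝓕p K hK.1 i).1
  · rintro _ ⟨K, hK, rfl⟩
    exact (h𝓖p K hK.1 i).2

theorem exists_forall_choice_iff_of_principal_off (h𝓕 : 𝓕.Pairwise BoxDichotomous)
    (h𝓖 : 𝓖.Pairwise BoxDichotomous) (h𝓕p : ∀ K ∈ 𝓕, IsProperBox K)
    (h𝓖p : ∀ K ∈ 𝓖, IsProperBox K) (hU : ⋃ K ∈ 𝓕, boxSet K = ⋃ K ∈ 𝓖, boxSet K)
    (S : Finset (Fin d)) {E : ∀ i, Set (X i) → Prop} (hE : ∀ i, IsChoice (E i))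
    (hS : ∀ i ∉ S, ∃ x : X i, E i = fun A => x ∈ A) :
    (∃ K ∈ 𝓕, ∀ l, E l (K l)) ↔ ∃ K ∈ 𝓖, ∀ l, E l (K l) := by
  induction S using Finset.induction_on generalizing E with
  | empty =>
    choose x hx using fun i => hS i (Finset.notMem_empty i)
    simpa [boxSet, hx] using Set.ext_iff.1 hU x
  | insert i S hi ih =>
    have hsection : ⋃₀ sectionAt 𝓕 E i = ⋃₀ sectionAt 𝓖 E i := Set.ext fun x => by
      simp only [Set.mem_sUnion, ← exists_mem_forall_update]
      refine ih (fun l => ?_) fun l hl => ?_ <;> by_cases hli : l = i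
      · subst hli
        simp [IsChoice]
      · simpa [hli] using hE l
      · subst hli
        exact ⟨x, by simp⟩
      · simpa [hli] using hS l (by simp [hli, hl])
    exact ⟨exists_forall_choice_of_sUnion_sectionAt_eq h𝓕 h𝓖 h𝓕p h𝓖p hE hsection,
      exists_forall_choice_of_sUnion_sectionAt_eq h𝓖 h𝓕 h𝓖p h𝓕p hE hsection.symm⟩

theorem exists_forall_choice_iff (h𝓕 : 𝓕.Pairwise BoxDichotomous)
    (h𝓖 : 𝓖.Pairwise BoxDichotomous) (h𝓕p : ∀ K ∈ 𝓕, IsProperBox K)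
    (h𝓖p : ∀ K ∈ 𝓖, IsProperBox K) (hU : ⋃ K ∈ 𝓕, boxSet K = ⋃ K ∈ 𝓖, boxSet K)
    {E : ∀ i, Set (X i) → Prop} (hE : ∀ i, IsChoice (E i)) :
    (∃ K ∈ 𝓕, ∀ l, E l (K l)) ↔ ∃ K ∈ 𝓖, ∀ l, E l (K l) :=
  exists_forall_choice_iff_of_principal_off h𝓕 h𝓖 h𝓕p h𝓖p hU Finset.univ hE
    fun i hi => absurd (Finset.mem_univ i) hi

/-- The letter that encodes the factor `A` at the coordinate `i`. A complementary pair of factors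
is named by its member containing the base point `x₀ i`. -/
noncomputable def letterOf (x₀ : ∀ i, X i) (i : Fin d) (A : Set (X i)) :
    Letter (Σ i, Set (X i)) :=
  if x₀ i ∈ A then ⟨⟨i, A⟩, true⟩ else ⟨⟨i, Aᶜ⟩, false⟩

/-- The word that encodes the box `K`. -/
noncomputable def wordOf (x₀ : ∀ i, X i) (K : ∀ i, Set (X i)) : Word (Fin d) (Σ i, Set (X i)) :=
  fun i => letterOf x₀ i (K i)

theorem letterOf_compl (x₀ : ∀ i, X i) (i : Fin d) (A : Set (X i)) :
    letterOf x₀ i Aᶜ = (letterOf x₀ i A)ᶜ := by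
  by_cases h : x₀ i ∈ A <;> apply Letter.ext <;> simp [letterOf, h]

theorem letterOf_injective (x₀ : ∀ i, X i) (i : Fin d) : Function.Injective (letterOf x₀ i) := by
  intro A B h
  unfold letterOf at h
  split_ifs at h <;> simp_all

theorem wordOf_injective (x₀ : ∀ i, X i) : Function.Injective (wordOf x₀) :=
  Function.Injective.piMap (letterOf_injective x₀)

theorem wordOf_eq_compl_iff {x₀ : ∀ i, X i} {K G : ∀ i, Set (X i)} {i : Fin d} :
    wordOf x₀ K i = (wordOf x₀ G i)ᶜ ↔ K i = (G i)ᶜ := by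
  rw [wordOf, wordOf, ← letterOf_compl, (letterOf_injective x₀ i).eq_iff]

theorem isTwinFreeCode_image_wordOf (x₀ : ∀ i, X i) (h𝓕 : 𝓕.Pairwise BoxDichotomous)
    (h𝓕tf : ∀ K ∈ 𝓕, ∀ G ∈ 𝓕, ¬ BoxTwinPair K G) {V : Finset (∀ i, Set (X i))}
    (hV : ↑V ⊆ 𝓕) : IsTwinFreeCode (V.image (wordOf x₀)) where
  dichotomous := by
    simp only [Finset.forall_mem_image]
    intro K hK G hG hne
    obtain ⟨i, hi⟩ := h𝓕 (hV hK) (hV hG) (ne_of_apply_ne _ hne)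
    exact ⟨i, wordOf_eq_compl_iff.2 hi⟩
  not_twin := by
    simp only [Finset.forall_mem_image]
    rintro K hK G hG ⟨j, hj, heq⟩
    exact h𝓕tf G (hV hG) K (hV hK)
      ⟨j, wordOf_eq_compl_iff.1 hj, fun i hi => letterOf_injective x₀ i (heq hi)⟩

theorem exists_mem_cylinder_wordOf_iff (h𝓕 : 𝓕.Pairwise BoxDichotomous)
    (h𝓖 : 𝓖.Pairwise BoxDichotomous) (h𝓕p : ∀ K ∈ 𝓕, IsProperBox K)
    (h𝓖p : ∀ K ∈ 𝓖, IsProperBox K) (hU : ⋃ K ∈ 𝓕, boxSet K = ⋃ K ∈ 𝓖, boxSet K)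
    (x₀ : ∀ i, X i) (x : Point (Fin d) (Σ i, Set (X i))) :
    (∃ K ∈ 𝓕, x ∈ cylinder (wordOf x₀ K)) ↔ ∃ K ∈ 𝓖, x ∈ cylinder (wordOf x₀ K) :=
  exists_forall_choice_iff h𝓕 h𝓖 h𝓕p h𝓖p hU (E := fun i A => Selects (x i) (letterOf x₀ i A))
    fun i A => by simp only [letterOf_compl, selects_compl]

theorem card_le_of_cylinder_wordOf (x₀ : ∀ i, X i) (h𝓖 : 𝓖.Pairwise BoxDichotomous)
    (h𝓖tf : ∀ K ∈ 𝓖, ∀ G ∈ 𝓖, ¬ BoxTwinPair K G) {V W : Finset (∀ i, Set (X i))} (hW : ↑W ⊆ 𝓖)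
    (h : ∀ x, (∃ K ∈ W, x ∈ cylinder (wordOf x₀ K)) → ∃ K ∈ V, x ∈ cylinder (wordOf x₀ K)) :
    W.card ≤ V.card := by
  have hle : (W.image (wordOf x₀)).card ≤ (V.image (wordOf x₀)).card := card_le_of_count_le fun x =>
    (isTwinFreeCode_image_wordOf x₀ h𝓖 h𝓖tf hW).count_le (by simpa using h x)
  rwa [Finset.card_image_of_injective _ (wordOf_injective x₀),
    Finset.card_image_of_injective _ (wordOf_injective x₀)] at hle

theorem finite_of_cylinder_wordOf (x₀ : ∀ i, X i) (h𝓖 : 𝓖.Pairwise BoxDichotomous)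
    (h𝓖tf : ∀ K ∈ 𝓖, ∀ G ∈ 𝓖, ¬ BoxTwinPair K G) (h𝓕fin : 𝓕.Finite)
    (h : ∀ x, (∃ K ∈ 𝓖, x ∈ cylinder (wordOf x₀ K)) → ∃ K ∈ 𝓕, x ∈ cylinder (wordOf x₀ K)) :
    𝓖.Finite := by
  by_contra hinf
  obtain ⟨W, hW, hWcard⟩ := Set.Infinite.exists_subset_card_eq hinf (h𝓕fin.toFinset.card + 1)
  have hle : W.card ≤ h𝓕fin.toFinset.card := card_le_of_cylinder_wordOf x₀ h𝓖 h𝓖tf hW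
    fun x ⟨K, hK, hx⟩ => by simpa using h x ⟨K, hW hK, hx⟩
  omega

theorem eq_of_cylinder_wordOf_iff {V W : Finset (∀ i, Set (X i))} (x₀ : ∀ i, X i)
    (hV : IsTwinFreeCode (V.image (wordOf x₀))) (hW : IsTwinFreeCode (W.image (wordOf x₀)))
    (h : ∀ x, (∃ K ∈ V, x ∈ cylinder (wordOf x₀ K)) ↔ ∃ K ∈ W, x ∈ cylinder (wordOf x₀ K))
    (hcard : V.card ≤ 11) : V = W := by
  have hcov : CoverEq (V.image (wordOf x₀)).val (W.image (wordOf x₀)).val := fun x =>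
    (hV.count_le (by simpa using (h x).1)).antisymm (hW.count_le (by simpa using (h x).2))
  exact Finset.image_injective (wordOf_injective x₀)
    (hV.eq_of_coverEq hW hcov (Finset.card_image_le.trans hcard))

end Boxes

end PolyboxCode

/-- If `𝓕` is a proper suit without twin pairs for a polybox `F` in a `d`-box
`X` and `|𝓕| ≤ 11`, then every proper suit `𝓖` for `F` contains a twin pair or
equals `𝓕`. -/
theorem suit_twinPair_or_eq {d : ℕ} {X : Fin d → Type*}
    [∀ i, Nontrivial (X i)]
    (F : Set (∀ i, X i)) (𝓕 𝓖 : Set (∀ i, Set (X i)))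
    (h𝓕 : IsSuit 𝓕) (h𝓕p : ∀ K ∈ 𝓕, IsProperBox K)
    (h𝓕F : (⋃ K ∈ 𝓕, boxSet K) = F)
    (h𝓕tf : ∀ K ∈ 𝓕, ∀ G ∈ 𝓕, ¬ BoxTwinPair K G)
    (h𝓕fin : 𝓕.Finite) (h𝓕card : 𝓕.ncard ≤ 11)
    (h𝓖 : IsSuit 𝓖) (h𝓖p : ∀ K ∈ 𝓖, IsProperBox K)
    (h𝓖F : (⋃ K ∈ 𝓖, boxSet K) = F) :
    (∃ K ∈ 𝓖, ∃ G ∈ 𝓖, BoxTwinPair K G) ∨ 𝓖 = 𝓕 := by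
  refine or_iff_not_imp_left.2 fun h𝓖tf => ?_
  push Not at h𝓖tf
  let x₀ : ∀ i, X i := fun i => Classical.arbitrary (X i)
  have hcover := PolyboxCode.exists_mem_cylinder_wordOf_iff h𝓖.2 h𝓕.2 h𝓖p h𝓕p
    (h𝓖F.trans h𝓕F.symm) x₀
  have h𝓖fin : 𝓖.Finite := PolyboxCode.finite_of_cylinder_wordOf x₀ h𝓖.2 h𝓖tf h𝓕fin
    fun x => (hcover x).1
  lift 𝓕 to Finset (∀ i, Set (X i)) using h𝓕fin
  lift 𝓖 to Finset (∀ i, Set (X i)) using h𝓖fin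
  rw [Set.ncard_coe_finset] at h𝓕card
  exact congrArg _ (PolyboxCode.eq_of_cylinder_wordOf_iff x₀
    (PolyboxCode.isTwinFreeCode_image_wordOf x₀ h𝓕.2 h𝓕tf subset_rfl)
    (PolyboxCode.isTwinFreeCode_image_wordOf x₀ h𝓖.2 h𝓖tf subset_rfl)
    (fun x => (hcover x).symm) h𝓕card).symm
end

section
/- Let S be a finite alphabet with complementation, let V ⊆ S^d be a polybox code without twin pairs, and let u ∈ S^d \ V be such that ǔ ⊆ ⋃_{v ∈ V} v̌ and ǔ ∩ v̌ ≠ ∅ for every v ∈ V. Then |V| ≥ 5, and if |V| = 5 then V is rigid. -/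
/-- `ES` is the set of all `B ⊆ S` containing exactly one letter from each
complementary pair `{s, s'}`. -/
def ESet {S : Type*} (c : S → S) : Set (Set S) :=
  {B | ∀ s, s ∈ B ↔ c s ∉ B}

/-- `Es = {B ∈ ES : s ∈ B}`. -/
def Eltr {S : Type*} (c : S → S) (s : S) : Set (Set S) :=
  {B | B ∈ ESet c ∧ s ∈ B}

/-- The equicomplementary realization `v̌ = Ev₁ × ⋯ × Ev_d` of a word `v ∈ S^d`,
viewed as a box in the `d`-box `(ES)^d`. -/
def realize {S : Type*} (c : S → S) {d : ℕ} (v : Fin d → S) :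
    Set (Fin d → Set S) :=
  {B | ∀ i, B i ∈ Eltr c (v i)}

/-- Words `u, v ∈ S^d` are dichotomous: some coordinate carries complementary
letters. -/
def Dichotomous {S : Type*} (c : S → S) {d : ℕ} (u v : Fin d → S) : Prop :=
  ∃ j, v j = c (u j)

/-- Words `u, v ∈ S^d` form a twin pair. -/
def TwinPair {S : Type*} (c : S → S) {d : ℕ} (u v : Fin d → S) : Prop :=
  ∃ j, v j = c (u j) ∧ ∀ i, i ≠ j → u i = v i

/-- A polybox code: a set of pairwise dichotomous words. -/
def PolyboxCode {S : Type*} (c : S → S) {d : ℕ} (V : Set (Fin d → S)) : Prop :=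
  ∀ u ∈ V, ∀ v ∈ V, u ≠ v → Dichotomous c u v

/-- Polybox codes `V, W ⊆ S^d` are equivalent if
`⋃_{v ∈ V} v̌ = ⋃_{w ∈ W} w̌`. -/
def Equivalent {S : Type*} (c : S → S) {d : ℕ}
    (V W : Set (Fin d → S)) : Prop :=
  (⋃ v ∈ V, realize c v) = ⋃ w ∈ W, realize c w

/-- A polybox code `V ⊆ S^d` is rigid if every polybox code equivalent to `V`
equals `V`. -/
def Rigid {S : Type*} (c : S → S) {d : ℕ} (V : Set (Fin d → S)) : Prop :=
  ∀ W : Set (Fin d → S), PolyboxCode c W → Equivalent c V W → W = V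

/-!
Call `A` a tight cover of a word `u` if the boxes of `A` cover `ǔ` and each of them meets `ǔ`.
Let the twin-pair-free code `A` be a tight cover of `u`, let `x ∈ A` and `x i ≠ u i`. Swapping
`x i` and `(x i)'` in the `i`-th coordinate of a point preserves `ǔ`, so it matches the part of
`ǔ` covered by the words with letter `x i` at `i` with the part covered by the words with letter
`(x i)'`. If `x` were the only word with letter `x i` at `i`, the words with letter `(x i)'`
would tightly cover the twin of `x`; if all words had letter `x i` or `(x i)'` at `i`, the two
halves of `A` would tightly cover a twin pair. Both are impossible when every proper subset of
`A` tightly covers only its own members, so then `A` has two words with letter `x i`, two with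
`(x i)'`, and a fifth one. Hence, by induction, a code with at most four words tightly covers
only its own members.

If `|A| = 5` and no word of `A` has letter `u i` at `i`, the fifth word brings a second group of
four; so every letter of `u` occurs at its place in `A`. A word `w` with `w i ≠ u i` tightly
covered by `A` would then force the letter `(u i)'` to occur at `i`, whence `w = u`. So an
equivalent code consists of words of `A` and possibly `u`, which leaves only `A`.
-/

open Function Set
open scoped symmDiff

/-- The map `s ↦ s'` of an alphabet with complementation. -/
structure IsComplementation {S : Type*} (c : S → S) : Prop where
  involutive : Involutive c
  ne_self : ∀ s, c s ≠ s

/-- A set of words containing no twin pair. -/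
def TwinFree {S : Type*} (c : S → S) {d : ℕ} (A : Set (Fin d → S)) : Prop :=
  ∀ u ∈ A, ∀ v ∈ A, ¬ TwinPair c u v

/-- The boxes of `A` cover `ǔ` and each of them meets `ǔ`; the latter is encoded as `u` being
dichotomous to no word of `A`. -/
structure IsTightCover {S : Type*} (c : S → S) {d : ℕ} (A : Set (Fin d → S))
    (u : Fin d → S) : Prop where
  not_dichotomous : ∀ v ∈ A, ¬ Dichotomous c u v
  realize_subset : realize c u ⊆ ⋃ v ∈ A, realize c v

/-- Every word tightly covered by a proper subset of `A` belongs to that subset. This is the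
inductive hypothesis of the lower bound on the size of a tight cover. -/
def ProperSubcoversTrivial {S : Type*} (c : S → S) {d : ℕ} (A : Set (Fin d → S)) : Prop :=
  ∀ B ⊂ A, ∀ w, IsTightCover c B w → w ∈ B

/-- Swaps `s` and `c s` in the `i`-th coordinate of a point of `(ES)^d`. -/
def flipAt {S : Type*} (c : S → S) {d : ℕ} (i : Fin d) (s : S) (z : Fin d → Set S) :
    Fin d → Set S :=
  update z i (z i ∆ {s, c s})

section

variable {S : Type*} {c : S → S} {d : ℕ} {u v w x : Fin d → S} {A V W : Set (Fin d → S)}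
  {i : Fin d} {s t : S} {z : Fin d → Set S}

/-! ### Points of boxes -/

theorem exists_mem_ESet_superset (hc : IsComplementation c) {L : Set S}
    (hL : ∀ x ∈ L, c x ∉ L) : ∃ B ∈ ESet c, L ⊆ B := by
  -- In a pair disjoint from `L`, choose the letter that comes first in a well-order.
  refine ⟨{x | x ∈ L ∨ (c x ∉ L ∧ WellOrderingRel x (c x))}, fun x ↦ ?_, fun x hx ↦ Or.inl hx⟩
  have hLc : c x ∈ L → x ∉ L := fun h ↦ hc.involutive x ▸ hL (c x) h
  have htri := trichotomous_of WellOrderingRel x (c x)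
  have hasymm : WellOrderingRel x (c x) → ¬ WellOrderingRel (c x) x := asymm_of _
  have hx := hL x
  have hne := (hc.ne_self x).symm
  simp only [mem_ofPred_eq, hc.involutive x]
  tauto

theorem exists_mem_Eltr_inter_notMem (hc : IsComplementation c) {r : S} (hst : t ≠ c s)
    (hrs : r ≠ s) (hrt : r ≠ t) : ∃ B ∈ Eltr c s ∩ Eltr c t, r ∉ B := by
  have hconsistent : ∀ x ∈ ({s, t, c r} : Set S), c x ∉ ({s, t, c r} : Set S) := by
    have := hc.ne_self
    have := hc.involutive
    simp only [mem_insert_iff, mem_singleton_iff]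
    grind [Involutive]
  obtain ⟨B, hB, hsub⟩ := exists_mem_ESet_superset hc hconsistent
  exact ⟨B, ⟨⟨hB, hsub (by simp)⟩, hB, hsub (by simp)⟩, fun hr ↦ (hB r).1 hr (hsub (by simp))⟩

theorem not_dichotomous_self (hc : IsComplementation c) : ¬ Dichotomous c u u :=
  fun ⟨j, hj⟩ ↦ hc.ne_self (u j) hj.symm

theorem not_dichotomous_of_mem_realize (hu : z ∈ realize c u) (hv : z ∈ realize c v) :
    ¬ Dichotomous c u v :=
  fun ⟨j, hj⟩ ↦ ((hu j).1 (u j)).1 (hu j).2 (hj ▸ (hv j).2)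

theorem realize_inter_nonempty (hc : IsComplementation c) (huv : ¬ Dichotomous c u v) :
    (realize c u ∩ realize c v).Nonempty := by
  have hletter (l : Fin d) : ∃ B ∈ Eltr c (u l) ∩ Eltr c (v l), c (u l) ∉ B :=
    exists_mem_Eltr_inter_notMem hc (fun h ↦ huv ⟨l, h⟩) (hc.ne_self _) (fun h ↦ huv ⟨l, h.symm⟩)
  choose z hz _ using hletter
  exact ⟨z, fun l ↦ (hz l).1, fun l ↦ (hz l).2⟩

theorem exists_mem_realize_inter_notMem (hc : IsComplementation c) (huv : ¬ Dichotomous c u v)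
    (hsu : s ≠ u i) (hsv : s ≠ v i) : ∃ z ∈ realize c u ∩ realize c v, s ∉ z i := by
  obtain ⟨z, hzu, hzv⟩ := realize_inter_nonempty hc huv
  obtain ⟨B, ⟨hBu, hBv⟩, hsB⟩ :=
    exists_mem_Eltr_inter_notMem hc (fun h ↦ huv ⟨i, h⟩) hsu hsv
  refine ⟨update z i B, ⟨fun l ↦ ?_, fun l ↦ ?_⟩, by rwa [update_self]⟩ <;>
    obtain rfl | hl := eq_or_ne l i <;> simp_all [realize]

theorem eq_of_realize_subset (hc : IsComplementation c) (h : realize c v ⊆ realize c w) :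
    v = w := by
  by_contra hvw
  obtain ⟨i, hi⟩ := ne_iff.1 hvw
  obtain ⟨z, hz, hwz⟩ :=
    exists_mem_realize_inter_notMem hc (not_dichotomous_self hc) hi.symm hi.symm
  exact hwz (h hz.1 i).2

theorem PolyboxCode.mono (hV : PolyboxCode c V) (hAV : A ⊆ V) : PolyboxCode c A :=
  fun u hu v hv ↦ hV u (hAV hu) v (hAV hv)

theorem TwinFree.mono (hV : TwinFree c V) (hAV : A ⊆ V) : TwinFree c A :=
  fun u hu v hv ↦ hV u (hAV hu) v (hAV hv)

theorem PolyboxCode.eq_of_mem_realize (hA : PolyboxCode c A) (hv : v ∈ A) (hw : w ∈ A)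
    (hzv : z ∈ realize c v) (hzw : z ∈ realize c w) : v = w := by
  by_contra hvw
  exact not_dichotomous_of_mem_realize hzv hzw (hA v hv w hw hvw)

theorem PolyboxCode.eq_of_subset_of_equivalent (hc : IsComplementation c) (hV : PolyboxCode c V)
    (hWV : W ⊆ V) (h : Equivalent c V W) : W = V := by
  refine hWV.antisymm fun v hv ↦ ?_
  obtain ⟨z, hzv, -⟩ := realize_inter_nonempty hc (not_dichotomous_self hc (u := v))
  obtain ⟨w, hw, hzw⟩ := mem_iUnion₂.1 (h ▸ mem_biUnion hv hzv)
  exact hV.eq_of_mem_realize hv (hWV hw) hzv hzw ▸ hw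

/-! ### Flips -/

theorem symmDiff_pair_mem_ESet (hinv : Involutive c) {B : Set S} (hB : B ∈ ESet c) (s : S) :
    B ∆ {s, c s} ∈ ESet c := by
  intro x
  have hx := hB x
  have hcx : c x = s ↔ x = c s := hinv.eq_iff
  simp only [mem_symmDiff, mem_insert_iff, mem_singleton_iff, hcx, hinv.injective.eq_iff]
  tauto

@[simp]
theorem flipAt_flipAt : flipAt c i s (flipAt c i s z) = z := by
  simp [flipAt]

theorem flipAt_mem_realize (hinv : Involutive c) (hz : z ∈ realize c v) (hs : v i ≠ s)
    (hcs : v i ≠ c s) : flipAt c i s z ∈ realize c v := by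
  intro l
  obtain rfl | hl := eq_or_ne l i
  · rw [flipAt, update_self]
    exact ⟨symmDiff_pair_mem_ESet hinv (hz l).1 s, Or.inl ⟨(hz l).2, by simp [hs, hcs]⟩⟩
  · simpa only [flipAt, update_of_ne hl] using hz l

theorem notMem_flipAt (hz : s ∈ z i) : s ∉ flipAt c i s z i := by
  simp [flipAt, mem_symmDiff, hz]

theorem flipAt_mem_realize_of_mem_realize_update (hinv : Involutive c)
    (hz : z ∈ realize c (update v i (c (v i)))) : flipAt c i (v i) z ∈ realize c v := by
  intro l
  have hzl := hz l
  obtain rfl | hl := eq_or_ne l i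
  · rw [update_self] at hzl
    rw [flipAt, update_self]
    exact ⟨symmDiff_pair_mem_ESet hinv hzl.1 _,
      Or.inr ⟨by simp, fun h ↦ (hzl.1 (v l)).1 h hzl.2⟩⟩
  · simpa only [flipAt, update_of_ne hl] using hzl

/-! ### Tight covers -/

theorem isTightCover_sep_not_dichotomous (h : realize c u ⊆ ⋃ v ∈ A, realize c v) :
    IsTightCover c {v ∈ A | ¬ Dichotomous c u v} u where
  not_dichotomous _ hv := hv.2
  realize_subset z hz := by
    obtain ⟨v, hv, hzv⟩ := mem_iUnion₂.1 (h hz)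
    exact mem_biUnion ⟨hv, not_dichotomous_of_mem_realize hz hzv⟩ hzv

/-- A point of `w̌` can be moved into `ǔ` by changing only coordinates at which all words of `A`
agree with `w`. -/
theorem isTightCover_of_realize_inter_subset (hc : IsComplementation c)
    (hAu : ∀ v ∈ A, ¬ Dichotomous c u v) (huw : ¬ Dichotomous c u w)
    (hagree : ∀ v ∈ A, ∀ l, w l ≠ u l → v l = w l)
    (hcover : realize c u ∩ realize c w ⊆ ⋃ v ∈ A, realize c v) : IsTightCover c A w where
  not_dichotomous v hv := by
    rintro ⟨l, hl⟩
    by_cases hwu : w l = u l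
    · exact hAu v hv ⟨l, hwu ▸ hl⟩
    · exact hc.ne_self (w l) (hl ▸ hagree v hv l hwu)
  realize_subset z hz := by
    classical
    obtain ⟨y, hyu, hyw⟩ := realize_inter_nonempty hc huw
    let z' : Fin d → Set S := fun l ↦ if w l = u l then z l else y l
    have hz'u : z' ∈ realize c u := fun l ↦ by
      by_cases hwu : w l = u l
      · simpa [z', hwu] using hz l
      · simpa [z', hwu] using hyu l
    have hz'w : z' ∈ realize c w := fun l ↦ by
      by_cases hwu : w l = u l
      · simpa [z', hwu] using hz l
      · simpa [z', hwu] using hyw l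
    obtain ⟨v, hv, hz'v⟩ := mem_iUnion₂.1 (hcover ⟨hz'u, hz'w⟩)
    refine mem_biUnion hv fun l ↦ ?_
    by_cases hwu : w l = u l
    · simpa [z', hwu] using hz'v l
    · rw [hagree v hv l hwu]
      exact hz l

namespace IsTightCover

theorem apply_ne_compl (h : IsTightCover c A u) (hx : x ∈ A) (i : Fin d) : x i ≠ c (u i) :=
  fun hi ↦ h.not_dichotomous x hx ⟨i, hi⟩

theorem compl_apply_ne (hinv : Involutive c) (h : IsTightCover c A u) (hx : x ∈ A)
    (i : Fin d) : c (x i) ≠ u i :=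
  fun hi ↦ h.apply_ne_compl hx i (hinv.eq_iff.1 hi)

theorem nonempty (hc : IsComplementation c) (h : IsTightCover c A u) : A.Nonempty := by
  obtain ⟨z, hz, -⟩ := realize_inter_nonempty hc (not_dichotomous_self hc (u := u))
  obtain ⟨v, hv, -⟩ := mem_iUnion₂.1 (h.realize_subset hz)
  exact ⟨v, hv⟩

theorem exists_flipAt_mem_realize (hinv : Involutive c) (hA : PolyboxCode c A)
    (h : IsTightCover c A u) (hx : x ∈ A) (hxi : x i ≠ u i) (hzu : z ∈ realize c u)
    (hzx : z ∈ realize c x) : ∃ y ∈ A, y i = c (x i) ∧ flipAt c i (x i) z ∈ realize c y := by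
  have hflip := flipAt_mem_realize hinv hzu hxi.symm (h.compl_apply_ne hinv hx i).symm
  obtain ⟨y, hy, hzy⟩ := mem_iUnion₂.1 (h.realize_subset hflip)
  have hyx : y i ≠ x i := fun hi ↦ notMem_flipAt (hzx i).2 (hi ▸ (hzy i).2)
  refine ⟨y, hy, ?_, hzy⟩
  by_contra hyc
  have hzy' : z ∈ realize c y := by simpa using flipAt_mem_realize hinv hzy hyx hyc
  exact hyx (hA.eq_of_mem_realize hx hy hzx hzy' ▸ rfl)

theorem exists_apply_eq_compl (hc : IsComplementation c) (hA : PolyboxCode c A)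
    (h : IsTightCover c A u) (hx : x ∈ A) (hxi : x i ≠ u i) : ∃ y ∈ A, y i = c (x i) := by
  obtain ⟨z, hzu, hzx⟩ := realize_inter_nonempty hc (h.not_dichotomous x hx)
  obtain ⟨y, hy, hyi, -⟩ := h.exists_flipAt_mem_realize hc.involutive hA hx hxi hzu hzx
  exact ⟨y, hy, hyi⟩

/-- If `y` and `x` disagreed at `l ≠ i` and `x l ≠ u l`, a point of `ǔ ∩ y̌` avoiding `x l` at `l`
would flip to a point outside `x̌`. -/
theorem apply_eq_of_apply_eq_compl (hc : IsComplementation c) (hA : PolyboxCode c A)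
    (h : IsTightCover c A u) (hx : x ∈ A) (hxi : x i ≠ u i)
    (hunique : ∀ y ∈ A, y i = x i → y = x) {y : Fin d → S} (hy : y ∈ A) (hyi : y i = c (x i))
    {l : Fin d} (hli : l ≠ i) (hxl : x l ≠ u l) : y l = x l := by
  by_contra hyx
  obtain ⟨z, ⟨hzu, hzy⟩, hxz⟩ :=
    exists_mem_realize_inter_notMem hc (h.not_dichotomous y hy) hxl (Ne.symm hyx)
  have hyu : y i ≠ u i := hyi ▸ h.compl_apply_ne hc.involutive hx i
  obtain ⟨x', hx', hx'i, hzx'⟩ :=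
    h.exists_flipAt_mem_realize hc.involutive hA hy hyu hzu hzy
  rw [hyi, hc.involutive] at hx'i
  obtain rfl := hunique x' hx' hx'i
  have hmem := (hzx' l).2
  rw [flipAt, update_of_ne hli] at hmem
  exact hxz hmem

theorem twin_of_unique (hc : IsComplementation c) (hA : PolyboxCode c A)
    (h : IsTightCover c A u) (hx : x ∈ A) (hxi : x i ≠ u i)
    (hunique : ∀ y ∈ A, y i = x i → y = x) :
    IsTightCover c {y ∈ A | y i = c (x i)} (update x i (c (x i))) := by
  have hinv := hc.involutive
  refine isTightCover_of_realize_inter_subset hc (fun y hy ↦ h.not_dichotomous y hy.1) ?_ ?_ ?_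
  · rintro ⟨l, hl⟩
    obtain rfl | hli := eq_or_ne l i
    · exact hxi (hinv.injective (by simpa using hl))
    · exact h.apply_ne_compl hx l (by simpa [hli] using hl)
  · rintro y ⟨hy, hyi⟩ l hl
    obtain rfl | hli := eq_or_ne l i
    · rwa [update_self]
    · rw [update_of_ne hli] at hl ⊢
      exact h.apply_eq_of_apply_eq_compl hc hA hx hxi hunique hy hyi hli hl
  · rintro z ⟨hzu, hzx⟩
    have hflip := flipAt_mem_realize hinv hzu hxi.symm (h.compl_apply_ne hinv hx i).symm
    obtain ⟨y, hy, hyi, hzy⟩ := h.exists_flipAt_mem_realize hinv hA hx hxi hflip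
      (flipAt_mem_realize_of_mem_realize_update hinv hzx)
    rw [flipAt_flipAt] at hzy
    exact mem_biUnion ⟨hy, hyi⟩ hzy

theorem half_of_forall_eq_or_eq_compl (hc : IsComplementation c) (h : IsTightCover c A u)
    (hs : s ≠ c (u i)) (hall : ∀ y ∈ A, y i = s ∨ y i = c s) :
    IsTightCover c {y ∈ A | y i = s} (update u i s) := by
  refine isTightCover_of_realize_inter_subset hc (fun y hy ↦ h.not_dichotomous y hy.1) ?_ ?_ ?_
  · rintro ⟨l, hl⟩
    obtain rfl | hli := eq_or_ne l i
    · exact hs (by simpa using hl)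
    · exact hc.ne_self (u l) (by simpa [hli] using hl.symm)
  · rintro y ⟨-, hyi⟩ l hl
    obtain rfl | hli := eq_or_ne l i
    · rwa [update_self]
    · exact absurd (update_of_ne hli s u) hl
  · rintro z ⟨hzu, hzs⟩
    obtain ⟨y, hy, hzy⟩ := mem_iUnion₂.1 (h.realize_subset hzu)
    have hsz : s ∈ z i := by simpa using (hzs i).2
    have hyi : y i ≠ c s := fun hi ↦ ((hzu i).1 s).1 hsz (hi ▸ (hzy i).2)
    exact mem_biUnion ⟨hy, (hall y hy).resolve_right hyi⟩ hzy

theorem sep_apply_eq_nontrivial (hc : IsComplementation c) (hA : PolyboxCode c A)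
    (hAt : TwinFree c A) (hsub : ProperSubcoversTrivial c A) (h : IsTightCover c A u)
    (hx : x ∈ A) (hxi : x i ≠ u i) : {y ∈ A | y i = x i}.Nontrivial := by
  by_contra hsingle
  have hunique : ∀ y ∈ A, y i = x i → y = x := fun y hy hyi ↦
    not_nontrivial_iff.1 hsingle ⟨hy, hyi⟩ ⟨hx, rfl⟩
  have hproper : {y ∈ A | y i = c (x i)} ⊂ A :=
    ssubset_iff_exists.2 ⟨sep_subset .., x, hx, fun h ↦ (hc.ne_self (x i)).symm h.2⟩
  have htwin := hsub _ hproper _ (h.twin_of_unique hc hA hx hxi hunique)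
  exact hAt x hx _ htwin.1 ⟨i, update_self .., fun l hl ↦ (update_of_ne hl ..).symm⟩

theorem exists_apply_ne_and_ne_compl (hc : IsComplementation c) (hA : PolyboxCode c A)
    (hAt : TwinFree c A) (hsub : ProperSubcoversTrivial c A) (h : IsTightCover c A u)
    (hx : x ∈ A) (hxi : x i ≠ u i) : ∃ y ∈ A, y i ≠ x i ∧ y i ≠ c (x i) := by
  by_contra! hnone
  have hall : ∀ y ∈ A, y i = x i ∨ y i = c (x i) := fun y hy ↦
    or_iff_not_imp_left.2 (hnone y hy)
  obtain ⟨x', hx', hx'i⟩ := h.exists_apply_eq_compl hc hA hx hxi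
  have hproper : {y ∈ A | y i = x i} ⊂ A :=
    ssubset_iff_exists.2 ⟨sep_subset .., x', hx', fun h ↦ hc.ne_self _ (hx'i.symm.trans h.2)⟩
  have hproper' : {y ∈ A | y i = c (x i)} ⊂ A :=
    ssubset_iff_exists.2 ⟨sep_subset .., x, hx, fun h ↦ (hc.ne_self (x i)).symm h.2⟩
  have hleft := hsub _ hproper _
    (h.half_of_forall_eq_or_eq_compl hc (h.apply_ne_compl hx i) hall)
  have hright := hsub _ hproper' _
    (h.half_of_forall_eq_or_eq_compl hc (hc.involutive.injective.ne hxi)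
      fun y hy ↦ (hc.involutive (x i)).symm ▸ (hall y hy).symm)
  exact hAt _ hleft.1 _ hright.1 ⟨i, by simp, fun l hl ↦ by simp [hl]⟩

theorem four_le_encard_sep (hc : IsComplementation c) (hA : PolyboxCode c A)
    (hAt : TwinFree c A) (hsub : ProperSubcoversTrivial c A) (h : IsTightCover c A u)
    (hx : x ∈ A) (hxi : x i ≠ u i) : 4 ≤ {y ∈ A | y i = x i ∨ y i = c (x i)}.encard := by
  obtain ⟨x', hx', hx'i⟩ := h.exists_apply_eq_compl hc hA hx hxi
  have hx'u : x' i ≠ u i := hx'i ▸ h.compl_apply_ne hc.involutive hx i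
  have hmany := h.sep_apply_eq_nontrivial hc hA hAt hsub hx hxi
  have hmany' := h.sep_apply_eq_nontrivial hc hA hAt hsub hx' hx'u
  rw [hx'i] at hmany'
  have hdisj : Disjoint {y ∈ A | y i = x i} {y ∈ A | y i = c (x i)} :=
    disjoint_left.2 fun y hy hy' ↦ hc.ne_self (x i) (hy'.2.symm.trans hy.2)
  rw [sep_or, encard_union_eq hdisj]
  calc (4 : ℕ∞) = (1 + 1) + (1 + 1) := by norm_num
    _ ≤ {y ∈ A | y i = x i}.encard + {y ∈ A | y i = c (x i)}.encard :=
      add_le_add (Order.add_one_le_of_lt (one_lt_encard_iff_nontrivial.2 hmany))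
        (Order.add_one_le_of_lt (one_lt_encard_iff_nontrivial.2 hmany'))

end IsTightCover

theorem encard_sep_add_encard_sep_le (hinv : Involutive c) (hts : t ≠ s) (htc : t ≠ c s) :
    {y ∈ A | y i = s ∨ y i = c s}.encard + {y ∈ A | y i = t ∨ y i = c t}.encard ≤ A.encard := by
  have hdisj : Disjoint {y ∈ A | y i = s ∨ y i = c s} {y ∈ A | y i = t ∨ y i = c t} := by
    have := hinv.eq_iff (x := t) (y := s)
    have := hinv.injective.eq_iff (a := t) (b := s)
    refine disjoint_left.2 fun y hy hy' ↦ ?_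
    grind
  rw [← encard_union_eq hdisj]
  exact encard_le_encard (union_subset (sep_subset ..) (sep_subset ..))

/-! ### Small tight covers -/

theorem IsTightCover.five_le_encard_of_properSubcoversTrivial (hc : IsComplementation c)
    (hA : PolyboxCode c A) (hAt : TwinFree c A) (hsub : ProperSubcoversTrivial c A)
    (h : IsTightCover c A u) (hu : u ∉ A) : 5 ≤ A.encard := by
  obtain ⟨x, hx⟩ := h.nonempty hc
  obtain ⟨i, hxi⟩ := ne_iff.1 (ne_of_mem_of_not_mem hx hu)
  obtain ⟨y, hy, hyx, hyc⟩ := h.exists_apply_ne_and_ne_compl hc hA hAt hsub hx hxi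
  have hfour := h.four_le_encard_sep hc hA hAt hsub hx hxi
  have hone : 1 ≤ {w ∈ A | w i = y i ∨ w i = c (y i)}.encard :=
    one_le_encard_iff_nonempty.2 ⟨y, hy, Or.inl rfl⟩
  exact (add_le_add hfour hone).trans (encard_sep_add_encard_sep_le hc.involutive hyx hyc)

theorem IsTightCover.mem_of_encard_lt_five (hc : IsComplementation c) (hA : PolyboxCode c A)
    (hAt : TwinFree c A) (h : IsTightCover c A u) (hcard : A.encard < 5) : u ∈ A := by
  induction hn : A.encard using WellFoundedLT.induction generalizing A u with
  | ind n ih =>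
    subst hn
    have hfin : A.Finite := encard_lt_top_iff.1 (hcard.trans_le le_top)
    have hsub : ProperSubcoversTrivial c A := fun B hBA w hw ↦
      have hlt : B.encard < A.encard := (hfin.subset hBA.subset).encard_lt_encard hBA
      ih _ hlt (hA.mono hBA.subset) (hAt.mono hBA.subset) hw (hlt.trans hcard) rfl
    by_contra hu
    exact hcard.not_ge (h.five_le_encard_of_properSubcoversTrivial hc hA hAt hsub hu)

theorem properSubcoversTrivial_of_encard_le_five (hc : IsComplementation c)
    (hA : PolyboxCode c A) (hAt : TwinFree c A) (hcard : A.encard ≤ 5) :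
    ProperSubcoversTrivial c A := fun B hBA _ hw ↦
  have hfin : B.Finite := (finite_of_encard_le_coe (k := 5) hcard).subset hBA.subset
  hw.mem_of_encard_lt_five hc (hA.mono hBA.subset) (hAt.mono hBA.subset)
    ((hfin.encard_lt_encard hBA).trans_le hcard)

theorem IsTightCover.exists_apply_eq (hc : IsComplementation c) (hA : PolyboxCode c A)
    (hAt : TwinFree c A) (h : IsTightCover c A u) (hcard : A.encard ≤ 5) (i : Fin d) :
    ∃ v ∈ A, v i = u i := by
  by_contra! hne
  have hsub := properSubcoversTrivial_of_encard_le_five hc hA hAt hcard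
  obtain ⟨x, hx⟩ := h.nonempty hc
  obtain ⟨y, hy, hyx, hyc⟩ := h.exists_apply_ne_and_ne_compl hc hA hAt hsub hx (hne x hx)
  have hge_eight : (4 + 4 : ℕ∞) ≤ A.encard :=
    (add_le_add (h.four_le_encard_sep hc hA hAt hsub hx (hne x hx))
      (h.four_le_encard_sep hc hA hAt hsub hy (hne y hy))).trans
      (encard_sep_add_encard_sep_le hc.involutive hyx hyc)
  exact absurd (hge_eight.trans hcard) (by decide)

theorem IsTightCover.eq_of_encard_le_five (hc : IsComplementation c) (hA : PolyboxCode c A)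
    (hAt : TwinFree c A) (hcard : A.encard ≤ 5) (hu : IsTightCover c A u)
    (hw : IsTightCover c A w) : w = u := by
  by_contra hwu
  obtain ⟨i, hi⟩ := ne_iff.1 hwu
  obtain ⟨v, hv, hvi⟩ := hu.exists_apply_eq hc hA hAt hcard i
  obtain ⟨v', hv', hv'i⟩ := hw.exists_apply_eq_compl hc hA hv (hvi.trans_ne hi.symm)
  exact hu.apply_ne_compl hv' i (hv'i.trans (congrArg c hvi))

theorem five_le_encard_sep_not_dichotomous (hc : IsComplementation c) (hV : PolyboxCode c V)
    (hVt : TwinFree c V) (hu : u ∉ V) (hcov : realize c u ⊆ ⋃ v ∈ V, realize c v) :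
    5 ≤ {v ∈ V | ¬ Dichotomous c u v}.encard := by
  by_contra! hlt
  exact hu ((isTightCover_sep_not_dichotomous hcov).mem_of_encard_lt_five hc
    (hV.mono (sep_subset ..)) (hVt.mono (sep_subset ..)) hlt).1

/-! ### Rigidity -/

theorem isTightCover_of_encard_eq_five (hc : IsComplementation c) (hV : PolyboxCode c V)
    (hVt : TwinFree c V) (hcard : V.encard = 5) (hu : u ∉ V)
    (hcov : realize c u ⊆ ⋃ v ∈ V, realize c v) : IsTightCover c V u := by
  have hall : {v ∈ V | ¬ Dichotomous c u v} = V :=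
    (finite_of_encard_eq_coe (k := 5) hcard).eq_of_subset_of_encard_le' (sep_subset ..)
      (hcard ▸ five_le_encard_sep_not_dichotomous hc hV hVt hu hcov)
  exact hall ▸ isTightCover_sep_not_dichotomous hcov

theorem IsTightCover.notMem_of_equivalent (hc : IsComplementation c) (h : IsTightCover c V u)
    (hu : u ∉ V) (hW : PolyboxCode c W) (hWV : W ⊆ insert u V) (hVW : Equivalent c V W) :
    u ∉ W := by
  intro huW
  have hWu : ∀ w ∈ W, w = u := fun w hw ↦ by
    by_contra hwu
    exact h.not_dichotomous w ((hWV hw).resolve_left hwu) (hW u huW w hw (Ne.symm hwu))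
  obtain ⟨v, hv⟩ := h.nonempty hc
  have hvu : realize c v ⊆ realize c u := by
    have hsub : realize c v ⊆ ⋃ w ∈ W, realize c w := hVW ▸ subset_biUnion_of_mem hv
    exact hsub.trans (iUnion₂_subset fun w hw ↦ (hWu w hw ▸ subset_rfl))
  exact hu (eq_of_realize_subset hc hvu ▸ hv)

theorem rigid_of_encard_eq_five (hc : IsComplementation c) (hV : PolyboxCode c V)
    (hVt : TwinFree c V) (hcard : V.encard = 5) (hu : u ∉ V)
    (hcov : realize c u ⊆ ⋃ v ∈ V, realize c v) : Rigid c V := by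
  intro W hW hVW
  have hVu := isTightCover_of_encard_eq_five hc hV hVt hcard hu hcov
  have hWV : W ⊆ insert u V := fun w hw ↦ or_iff_not_imp_right.2 fun hwV ↦
    hVu.eq_of_encard_le_five hc hV hVt hcard.le
      (isTightCover_of_encard_eq_five hc hV hVt hcard hwV (hVW ▸ subset_biUnion_of_mem hw))
  have huW := hVu.notMem_of_equivalent hc hu hW hWV hVW
  exact hV.eq_of_subset_of_equivalent hc ((subset_insert_iff_of_notMem huW).1 hWV) hVW

theorem five_le_card_and_rigid_of_covered_general (hc : IsComplementation c)
    (hV : PolyboxCode c V) (hVt : TwinFree c V) (hu : u ∉ V)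
    (hcov : realize c u ⊆ ⋃ v ∈ V, realize c v) :
    5 ≤ V.encard ∧ (V.encard = 5 → Rigid c V) :=
  ⟨(five_le_encard_sep_not_dichotomous hc hV hVt hu hcov).trans
    (encard_le_encard (sep_subset ..)),
    fun hcard ↦ rigid_of_encard_eq_five hc hV hVt hcard hu hcov⟩

end

/-- If `V ⊆ S^d` is a twin-pair-free polybox code and `u ∈ S^d \ V` satisfies
`ǔ ⊆ ⋃_{v ∈ V} v̌` and `ǔ ∩ v̌ ≠ ∅` for every `v ∈ V`, then `|V| ≥ 5`; and if
`|V| = 5` then `V` is rigid. -/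
theorem five_le_card_and_rigid_of_covered {S : Type*} [Fintype S] (c : S → S)
    (hinv : ∀ s, c (c s) = s) (hne : ∀ s, c s ≠ s) {d : ℕ}
    (V : Set (Fin d → S)) (hV : PolyboxCode c V)
    (hVtf : ∀ u ∈ V, ∀ v ∈ V, ¬ TwinPair c u v)
    (u : Fin d → S) (hu : u ∉ V)
    (hcov : realize c u ⊆ ⋃ v ∈ V, realize c v)
    (hmeet : ∀ v ∈ V, (realize c u ∩ realize c v).Nonempty) :
    5 ≤ V.ncard ∧ (V.ncard = 5 → Rigid c V) := by
  have h := five_le_card_and_rigid_of_covered_general ⟨hinv, hne⟩ hV hVtf hu hcov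
  rw [← V.toFinite.cast_ncard_eq] at h
  exact_mod_cast h
end
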